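/- Let α < ω₁. Then there is a block subspace X = [x_n] ⊆ W such that one of the following holds: (1) for every normalised block sequence (y_n) in X there is a sequence I_0 < I_1 < I_2 < … of finite intervals of ℕ such that for every infinite A ⊆ ℕ, Emb((y_n), [x_j : j ∉ ⋃_{m∈A} I_m]) ≤ ω·α; or (2) for every infinite-dimensional subspace Y ⊆ X and every block sequence (z_n) in X, Emb((z_n), Y) > α. -/

import Mathlib

open Filter Topology

namespace Rosendal

variable {𝒲 : Type} [NormedAddCommGroup 𝒲] [NormedSpace ℝ 𝒲]

/-- `(e n)` is a Schauder basis of the Banach space `𝒲`. -/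
def IsSchauderBasis (e : ℕ → 𝒲) : Prop :=
  ∀ x : 𝒲, ∃! a : ℕ → ℝ,
    Tendsto (fun N => ∑ i ∈ Finset.range N, a i • e i) atTop (𝓝 x)

/-- `x` is a linear combination of the vectors `b i`, `i ∈ s`. -/
def SuppIn (b : ℕ → 𝒲) (x : 𝒲) (s : Finset ℕ) : Prop :=
  ∃ a : ℕ → ℝ, x = ∑ i ∈ s, a i • b i

/-- `(x i)_{i<k} ∼_K (y i)_{i<k}`. -/
def SeqEquiv (K : ℝ) (k : ℕ) (x y : ℕ → 𝒲) : Prop :=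
  ∀ a : ℕ → ℝ,
    (1 / K) * ‖∑ i ∈ Finset.range k, a i • x i‖ ≤ ‖∑ i ∈ Finset.range k, a i • y i‖ ∧
    ‖∑ i ∈ Finset.range k, a i • y i‖ ≤ K * ‖∑ i ∈ Finset.range k, a i • x i‖

/-- The outcome `l = (x 0, …, x k)` satisfies `(x 0, …, x k) ∼_K (y 0, …, y k)`. -/
def OutcomeEquiv (K : ℝ) (l : List 𝒲) (y : ℕ → 𝒲) : Prop :=
  SeqEquiv K l.length (fun i => l.getD i 0) y

/-- The outcome `l = (u 0, v 0, u 1, v 1, …, u k, v k)` satisfies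
`(u 0, …, u k) ∼_K (v 0, …, v k)`. -/
def PairOutcomeEquiv (K : ℝ) (l : List 𝒲) : Prop :=
  SeqEquiv K (l.length / 2) (fun i => l.getD (2 * i) 0) (fun i => l.getD (2 * i + 1) 0)

/-- The tree `T((x n), Y, K)`. -/
def embTree (x : ℕ → 𝒲) (Y : Set 𝒲) (K : ℝ) : Set (List 𝒲) :=
  {l | (∀ v ∈ l, v ∈ Y) ∧ SeqEquiv K l.length (fun i => l.getD i 0) x}

open Classical in
/-- The rank of a tree of finite sequences; `⊤ = ∞` if it is ill-founded. -/
noncomputable def treeRank (T : Set (List 𝒲)) : WithTop Ordinal :=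
  if h : WellFounded (fun t s : T => s.val <+: t.val ∧ s.val ≠ t.val) then
    ((⨆ s : T, Order.succ ((h.apply s).rank) : Ordinal) : WithTop Ordinal)
  else ⊤

open Classical in
/-- The embeddability index `Emb((x n), Y) = sup_{K ≥ 1} rank T((x n), Y, K)`. -/
noncomputable def embIndex (x : ℕ → 𝒲) (Y : Set 𝒲) : WithTop Ordinal :=
  if ∃ K : ℝ, 1 ≤ K ∧ treeRank (embTree x Y K) = ⊤ then ⊤
  else ((sSup {o : Ordinal | ∃ K : ℝ, 1 ≤ K ∧
      (o : WithTop Ordinal) = treeRank (embTree x Y K)} : Ordinal) : WithTop Ordinal)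

/-- `(I m)` is a sequence of successive nonempty finite intervals `I 0 < I 1 < …` of `ℕ`. -/
def IntervalSeq (I : ℕ → Finset ℕ) : Prop :=
  (∀ m, ∃ a b : ℕ, a ≤ b ∧ I m = Finset.Icc a b) ∧
  ∀ m, ∀ i ∈ I m, ∀ j ∈ I (m + 1), i < j

/-- The setting of Section 2 of the paper: a Banach space `𝒲` with a Schauder basis
`(e n)`, a countable subfield `𝔽 ⊆ ℝ` closed under the norms of finite `𝔽`-linear
combinations of the basis, and the countable `𝔽`-vector space `W` spanned by `(e n)`. -/
structure Frame (𝒲 : Type) [NormedAddCommGroup 𝒲] [NormedSpace ℝ 𝒲] : Type where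
  e : ℕ → 𝒲
  complete : CompleteSpace 𝒲
  basis : IsSchauderBasis e
  𝔽 : Subfield ℝ
  countable : (𝔽 : Set ℝ).Countable
  norm_mem : ∀ (s : Finset ℕ) (a : ℕ → ℝ), (∀ i ∈ s, a i ∈ 𝔽) →
    ‖∑ i ∈ s, a i • e i‖ ∈ 𝔽

namespace Frame

variable {𝒲 : Type} [NormedAddCommGroup 𝒲] [NormedSpace ℝ 𝒲] (ctx : Frame 𝒲)

/-- The `𝔽`-linear span of a set of vectors. -/
def fspan (S : Set 𝒲) : Set 𝒲 :=
  {v | ∃ t : Finset 𝒲, ↑t ⊆ S ∧ ∃ c : 𝒲 → ℝ, (∀ w, c w ∈ ctx.𝔽) ∧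
    v = ∑ w ∈ t, c w • w}

/-- The countable `𝔽`-vector space `W` with basis `(e n)`. -/
def W : Set 𝒲 := ctx.fspan (Set.range ctx.e)

/-- `(y n)` is a block sequence with respect to the reference block basis `(b n)`:
a sequence of nonzero vectors of the `𝔽`-span of `(b n)` with successive supports. -/
def BlockSeqRel (b y : ℕ → 𝒲) : Prop :=
  (∀ n, y n ∈ ctx.fspan (Set.range b)) ∧ (∀ n, y n ≠ 0) ∧
  ∃ D : ℕ → Finset ℕ, (∀ n, SuppIn b (y n) (D n)) ∧
    ∀ n, ∀ i ∈ D n, ∀ j ∈ D (n + 1), i < j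

/-- `(y n)` is a block sequence (with respect to the basis `(e n)` of `W`). -/
def IsBlockSeq (y : ℕ → 𝒲) : Prop := ctx.BlockSeqRel ctx.e y

/-- `Y` is a block subspace of `X`: the `𝔽`-span of an infinite block sequence of
vectors of `X`. -/
def IsBlockSubspaceOf (Y X : Set 𝒲) : Prop :=
  ∃ y : ℕ → 𝒲, ctx.IsBlockSeq y ∧ (∀ n, y n ∈ X) ∧ Y = ctx.fspan (Set.range y)

/-- `Y` is a block subspace of `W`. -/
def IsBlockSubspace (Y : Set 𝒲) : Prop := ctx.IsBlockSubspaceOf Y ctx.W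

/-- `F` is a finite-dimensional `𝔽`-subspace of `X`. -/
def IsFinDimIn (F X : Set 𝒲) : Prop :=
  ∃ t : Finset 𝒲, ↑t ⊆ X ∧ F = ctx.fspan ↑t

/-- `n < F`: every vector of `F` is supported on basis vectors of index `> n`. -/
def NatLt (n : ℕ) (F : Set 𝒲) : Prop :=
  ∀ x ∈ F, ∃ s : Finset ℕ, SuppIn ctx.e x s ∧ ∀ i ∈ s, n < i

/-- `V` is an `𝔽`-subspace of `𝒲`. -/
def IsSubspace (V : Set 𝒲) : Prop :=
  (0 : 𝒲) ∈ V ∧ (∀ u v : 𝒲, u ∈ V → v ∈ V → u + v ∈ V) ∧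
    ∀ c : ℝ, c ∈ ctx.𝔽 → ∀ v ∈ V, c • v ∈ V

/-- `V` is infinite-dimensional (not contained in a finitely generated subspace). -/
def IsInfDim (V : Set 𝒲) : Prop :=
  ¬∃ t : Finset 𝒲, V ⊆ ctx.fspan ↑t

/-- Game values of the asymptotic game `F^β_X`, for player II, computed by transfinite
recursion on the ordinal bound.  `IIWinsF X S β Facc vec` states: in the asymptotic game
below `X`, from a position where the vectors `vec` have been played and the
finite-dimensional subspaces played by II span `Facc`, and where I must now play a natural
number together with an ordinal `< β`, player II has a strategy so that the final outcome
lies in `S`. -/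
noncomputable def IIWinsF (X : Set 𝒲) (S : Set (List 𝒲)) :
    Ordinal → Set 𝒲 → List 𝒲 → Prop :=
  WellFounded.fix (C := fun _ : Ordinal => Set 𝒲 → List 𝒲 → Prop) Ordinal.lt_wf
    (fun β ih Facc vec =>
      ∀ n : ℕ, ∀ ξ : Ordinal, ∀ hξ : ξ < β,
        ∃ F : Set 𝒲, ctx.IsFinDimIn F X ∧ ctx.NatLt n F ∧
          ∃ x : 𝒲, x ≠ 0 ∧ x ∈ ctx.fspan (Facc ∪ F) ∧
            (ξ = 0 → vec ++ [x] ∈ S) ∧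
            (ξ ≠ 0 → ih ξ hξ (ctx.fspan (Facc ∪ F)) (vec ++ [x])))

/-- Player II has a strategy in the asymptotic game `F^β_X` to play an outcome in `S`. -/
noncomputable def IIStratF (X : Set 𝒲) (β : Ordinal) (S : Set (List 𝒲)) : Prop :=
  (β = 0 → ([] : List 𝒲) ∈ S) ∧ (β ≠ 0 → ctx.IIWinsF X S β (ctx.fspan ∅) [])

/-- Game values of the asymptotic game `F^β_X` for player I (who plays the integers and
the ordinals, trying to steer the outcome into `S`). -/
noncomputable def IWinsF (X : Set 𝒲) (S : Set (List 𝒲)) :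
    Ordinal → Set 𝒲 → List 𝒲 → Prop :=
  WellFounded.fix (C := fun _ : Ordinal => Set 𝒲 → List 𝒲 → Prop) Ordinal.lt_wf
    (fun β ih Facc vec =>
      ∃ n : ℕ, ∃ ξ : Ordinal, ∃ hξ : ξ < β,
        ∀ F : Set 𝒲, ctx.IsFinDimIn F X → ctx.NatLt n F →
        ∀ x : 𝒲, x ≠ 0 → x ∈ ctx.fspan (Facc ∪ F) →
          (ξ = 0 → vec ++ [x] ∈ S) ∧
          (ξ ≠ 0 → ih ξ hξ (ctx.fspan (Facc ∪ F)) (vec ++ [x])))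

/-- Player I has a strategy in the asymptotic game `F^β_X` to play an outcome in `S`. -/
noncomputable def IStratF (X : Set 𝒲) (β : Ordinal) (S : Set (List 𝒲)) : Prop :=
  (β = 0 → ([] : List 𝒲) ∈ S) ∧ (β ≠ 0 → ctx.IWinsF X S β (ctx.fspan ∅) [])

/-- Game values of the Gowers game `G^α_X` for player II. -/
noncomputable def IIWinsG (X : Set 𝒲) (S : Set (List 𝒲)) :
    Ordinal → Set 𝒲 → List 𝒲 → Prop :=
  WellFounded.fix (C := fun _ : Ordinal => Set 𝒲 → List 𝒲 → Prop) Ordinal.lt_wf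
    (fun α ih Facc vec =>
      ∀ Y : Set 𝒲, ctx.IsBlockSubspaceOf Y X →
      ∀ ξ : Ordinal, ∀ hξ : ξ < α,
        ∃ F : Set 𝒲, ctx.IsFinDimIn F Y ∧
          ∃ x : 𝒲, x ≠ 0 ∧ x ∈ ctx.fspan (Facc ∪ F) ∧
            (ξ = 0 → vec ++ [x] ∈ S) ∧
            (ξ ≠ 0 → ih ξ hξ (ctx.fspan (Facc ∪ F)) (vec ++ [x])))

/-- Player II has a strategy in the generalised Gowers game `G^α_X` to play in `S`. -/
noncomputable def IIStratG (X : Set 𝒲) (α : Ordinal) (S : Set (List 𝒲)) : Prop :=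
  (α = 0 → ([] : List 𝒲) ∈ S) ∧ (α ≠ 0 → ctx.IIWinsG X S α (ctx.fspan ∅) [])

/-- Game values of the adversarial game `A^α_X` for player II (who plays the integers,
the finite-dimensional subspaces `F_l ⊆ Y_l` and the vectors `y_l`). -/
noncomputable def IIWinsA (X : Set 𝒲) (S : Set (List 𝒲)) :
    Ordinal → Set 𝒲 → Set 𝒲 → List 𝒲 → Prop :=
  WellFounded.fix (C := fun _ : Ordinal => Set 𝒲 → Set 𝒲 → List 𝒲 → Prop)
    Ordinal.lt_wf
    (fun α ih Eacc Facc vec =>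
      ∃ n : ℕ,
        ∀ E : Set 𝒲, ctx.IsFinDimIn E X → ctx.NatLt n E →
        ∀ x : 𝒲, x ≠ 0 → x ∈ ctx.fspan (Eacc ∪ E) →
        ∀ Y : Set 𝒲, ctx.IsBlockSubspaceOf Y X →
        ∀ ξ : Ordinal, ∀ hξ : ξ < α,
          ∃ F : Set 𝒲, ctx.IsFinDimIn F Y ∧
            ∃ y : 𝒲, y ≠ 0 ∧ y ∈ ctx.fspan (Facc ∪ F) ∧
              (ξ = 0 → vec ++ [x, y] ∈ S) ∧
              (ξ ≠ 0 → ih ξ hξ (ctx.fspan (Eacc ∪ E)) (ctx.fspan (Facc ∪ F))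
                (vec ++ [x, y])))

/-- Player II has a strategy in the adversarial game `A^α_X` to play in `S`. -/
noncomputable def IIStratA (X : Set 𝒲) (α : Ordinal) (S : Set (List 𝒲)) : Prop :=
  (α = 0 → ([] : List 𝒲) ∈ S) ∧
  (α ≠ 0 → ctx.IIWinsA X S α (ctx.fspan ∅) (ctx.fspan ∅) [])

/-- Game values of the adversarial game `B^α_X` for player I (who plays the
finite-dimensional subspaces `E_l ⊆ Y_l`, the vectors `x_l`, the integers and the
ordinals). -/
noncomputable def IWinsB (X : Set 𝒲) (S : Set (List 𝒲)) :
    Ordinal → Set 𝒲 → Set 𝒲 → List 𝒲 → Prop :=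
  WellFounded.fix (C := fun _ : Ordinal => Set 𝒲 → Set 𝒲 → List 𝒲 → Prop)
    Ordinal.lt_wf
    (fun α ih Eacc Facc vec =>
      ∀ Y : Set 𝒲, ctx.IsBlockSubspaceOf Y X →
        ∃ E : Set 𝒲, ctx.IsFinDimIn E Y ∧
          ∃ x : 𝒲, x ≠ 0 ∧ x ∈ ctx.fspan (Eacc ∪ E) ∧
            ∃ n : ℕ, ∃ ξ : Ordinal, ∃ hξ : ξ < α,
              ∀ F : Set 𝒲, ctx.IsFinDimIn F X → ctx.NatLt n F →
              ∀ y : 𝒲, y ≠ 0 → y ∈ ctx.fspan (Facc ∪ F) →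
                (ξ = 0 → vec ++ [x, y] ∈ S) ∧
                (ξ ≠ 0 → ih ξ hξ (ctx.fspan (Eacc ∪ E)) (ctx.fspan (Facc ∪ F))
                  (vec ++ [x, y])))

/-- Player I has a strategy in the adversarial game `B^α_X` to play in `S`. -/
noncomputable def IStratB (X : Set 𝒲) (α : Ordinal) (S : Set (List 𝒲)) : Prop :=
  (α = 0 → ([] : List 𝒲) ∈ S) ∧
  (α ≠ 0 → ctx.IWinsB X S α (ctx.fspan ∅) (ctx.fspan ∅) [])

/-- Game values of the adversarial game `B^α_X` for player II (who plays the block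
subspaces `Y_l`, the finite-dimensional subspaces `F_l` and the vectors `y_l`). -/
noncomputable def IIWinsB (X : Set 𝒲) (S : Set (List 𝒲)) :
    Ordinal → Set 𝒲 → Set 𝒲 → List 𝒲 → Prop :=
  WellFounded.fix (C := fun _ : Ordinal => Set 𝒲 → Set 𝒲 → List 𝒲 → Prop)
    Ordinal.lt_wf
    (fun α ih Eacc Facc vec =>
      ∃ Y : Set 𝒲, ctx.IsBlockSubspaceOf Y X ∧
        ∀ E : Set 𝒲, ctx.IsFinDimIn E Y →
        ∀ x : 𝒲, x ≠ 0 → x ∈ ctx.fspan (Eacc ∪ E) →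
        ∀ n : ℕ, ∀ ξ : Ordinal, ∀ hξ : ξ < α,
          ∃ F : Set 𝒲, ctx.IsFinDimIn F X ∧ ctx.NatLt n F ∧
            ∃ y : 𝒲, y ≠ 0 ∧ y ∈ ctx.fspan (Facc ∪ F) ∧
              (ξ = 0 → vec ++ [x, y] ∈ S) ∧
              (ξ ≠ 0 → ih ξ hξ (ctx.fspan (Eacc ∪ E)) (ctx.fspan (Facc ∪ F))
                (vec ++ [x, y])))

/-- Player II has a strategy in the adversarial game `B^α_X` to play in `S`. -/
noncomputable def IIStratB (X : Set 𝒲) (α : Ordinal) (S : Set (List 𝒲)) : Prop :=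
  (α = 0 → ([] : List 𝒲) ∈ S) ∧
  (α ≠ 0 → ctx.IIWinsB X S α (ctx.fspan ∅) (ctx.fspan ∅) [])

end Frame

end Rosendal

namespace Rosendal

/-!
Two players build sequences of finitely supported vectors whose images have to stay `K`-equivalent,
while an ordinal clock lowered by player I bounds the number of rounds. Only countably many
positions and clock values matter, so a diagonalisation gives a block subspace `X = [x n]` in which,
for every integer `K`, one of the players wins this game.

Suppose that (1) fails in `X` for the sequence `y`. Moving the first `d` vectors of the basic
sequence `x` into a window `[p, p + d)` costs a constant which depends only on `d`; hence there is a
single `K` such that `y` has embedding trees of rank at least `ω·α` in the spans of subsequences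
`(x j)`, `j ∈ J`, where `J` may be taken to start as late and to have gaps `[a, h a)` as long as
desired. If player I moves along `y`, player II can copy him in such a span: the gaps leave room for
the tails which player I prescribes. So player I does not win, and player II does. Following her
winning strategy inside `Y ⊆ [y n]`, while player I lists the vectors `x j` with `j ∈ J`, sends a
sequence `z` in `[y n]`, via its copy in `[x j : j ∈ J]`, into `Y`, and this gives a tree of rank at
least `α` with constant `K²`. A block subspace of `[y n]` therefore satisfies (2).
-/

section Tails

variable {k : Type*} [DivisionRing k]

/-- The subspace of finitely supported sequences that vanish before `n`. -/
abbrev tail (k : Type*) [DivisionRing k] (n : ℕ) : Submodule k (ℕ →₀ k) :=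
  Finsupp.supported k k (Set.Ici n)

lemma mem_tail {n : ℕ} {v : ℕ →₀ k} : v ∈ tail k n ↔ ∀ i < n, v i = 0 := by
  simp [Finsupp.mem_supported']

lemma tail_anti : Antitone (tail k) := fun _ _ h =>
  Finsupp.supported_mono (Set.Ici_subset_Ici.2 h)

/-- `X` has a nonzero vector in every tail, which for a subspace means that it is
infinite-dimensional; in this form the property passes to `X ⊓ tail k n` at once. -/
def MeetsTails (X : Submodule k (ℕ →₀ k)) : Prop :=
  ∀ n, ∃ v ∈ X ⊓ tail k n, v ≠ 0

lemma MeetsTails.inf_tail {X : Submodule k (ℕ →₀ k)} (hX : MeetsTails X) (m : ℕ) :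
    MeetsTails (X ⊓ tail k m) := fun n => by
  obtain ⟨v, ⟨hvX, hv⟩, hv0⟩ := hX (max m n)
  exact ⟨v, ⟨⟨hvX, tail_anti (le_max_left m n) hv⟩, tail_anti (le_max_right m n) hv⟩, hv0⟩

lemma meetsTails_top : MeetsTails (⊤ : Submodule k (ℕ →₀ k)) := fun n =>
  ⟨Finsupp.single n 1, ⟨trivial, Finsupp.single_mem_supported k 1 Set.self_mem_Ici⟩, by simp⟩

lemma meetsTails_of_not_fg {X : Submodule k (ℕ →₀ k)} (hX : ¬ X.FG) : MeetsTails X := by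
  intro n
  by_contra! hn
  let restrict : (ℕ →₀ k) →ₗ[k] (Fin n → k) := LinearMap.pi fun i => Finsupp.lapply (i : ℕ)
  have hker : X ⊓ LinearMap.ker restrict = ⊥ :=
    (Submodule.eq_bot_iff _).2 fun v ⟨hvX, hv⟩ =>
      hn v ⟨hvX, mem_tail.2 fun i hi => congrFun hv ⟨i, hi⟩⟩
  exact hX (Submodule.fg_of_fg_map_of_fg_inf_ker restrict (IsNoetherian.noetherian _)
    (hker ▸ Submodule.fg_bot))

/-- `X` is contained in `Y` up to finitely many coordinates. -/
def AlmostLE (X Y : Submodule k (ℕ →₀ k)) : Prop := ∃ m, X ⊓ tail k m ≤ Y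

lemma AlmostLE.of_le {X Y : Submodule k (ℕ →₀ k)} (h : X ≤ Y) : AlmostLE X Y :=
  ⟨0, inf_le_left.trans h⟩

lemma AlmostLE.exists_inf_tail_le {X Y : Submodule k (ℕ →₀ k)} (h : AlmostLE Y X)
    (n : ℕ) :
    ∃ m, Y ⊓ tail k m ≤ X ⊓ tail k n := by
  obtain ⟨m, hm⟩ := h
  exact ⟨max m n, le_inf ((inf_le_inf_left _ (tail_anti (le_max_left m n))).trans hm)
    (inf_le_right.trans (tail_anti (le_max_right m n)))⟩

/-- `x` is a sequence of nonzero vectors, the `n`-th of them supported in `[m n, m (n + 1))`. -/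
structure BlocksAt (x : ℕ → ℕ →₀ k) (m : ℕ → ℕ) : Prop where
  strictMono : StrictMono m
  ne_zero : ∀ n, x n ≠ 0
  mem_supported : ∀ n, x n ∈ Finsupp.supported k k (Set.Ico (m n) (m (n + 1)))

namespace BlocksAt

variable {x : ℕ → ℕ →₀ k} {m : ℕ → ℕ}

lemma mem_tail (h : BlocksAt x m) (n : ℕ) : x n ∈ tail k (m n) :=
  Finsupp.supported_mono Set.Ico_subset_Ici_self (h.mem_supported n)

lemma mem_tail_of_le (h : BlocksAt x m) {n j : ℕ} (hnj : n ≤ j) : x j ∈ tail k n :=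
  tail_anti (hnj.trans (h.strictMono.id_le j)) (h.mem_tail j)

lemma meetsTails_span (h : BlocksAt x m) : MeetsTails (Submodule.span k (Set.range x)) :=
  fun n => ⟨x n, ⟨Submodule.subset_span ⟨n, rfl⟩, h.mem_tail_of_le le_rfl⟩, h.ne_zero n⟩

lemma apply_eq_zero (h : BlocksAt x m) {i j q : ℕ} (hq : q ∈ Set.Ico (m i) (m (i + 1)))
    (hij : j ≠ i) : x j q = 0 := by
  refine (Finsupp.mem_supported' _ _).1 (h.mem_supported j) q fun hqj => hij ?_
  have hji : j < i + 1 := h.strictMono.lt_iff_lt.1 (hqj.1.trans_lt hq.2)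
  have hij : i < j + 1 := h.strictMono.lt_iff_lt.1 (hq.1.trans_lt hqj.2)
  omega

lemma span_inf_tail_le (h : BlocksAt x m) (N : ℕ) :
    Submodule.span k (Set.range x) ⊓ tail k (m N) ≤ Submodule.span k (x '' Set.Ici N) := by
  rintro v ⟨hv, hvN⟩
  obtain ⟨c, rfl⟩ := Finsupp.mem_span_range_iff_exists_finsupp.1 hv
  refine Submodule.sum_mem _ fun i hi => Submodule.smul_mem _ _ (Submodule.subset_span ⟨i, ?_, rfl⟩)
  by_contra hiN
  obtain ⟨q, hq⟩ := Finsupp.ne_iff.1 (h.ne_zero i)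
  have hq_mem : q ∈ Set.Ico (m i) (m (i + 1)) :=
    (Finsupp.mem_supported k _).1 (h.mem_supported i) (Finsupp.mem_support_iff.2 hq)
  have hcoeff : (c.sum fun j a => a • x j) q = c i * x i q := by
    rw [Finsupp.sum, Finsupp.finsetSum_apply, Finset.sum_eq_single_of_mem i hi fun j _ hj => by
      simp [h.apply_eq_zero hq_mem hj]]
    rfl
  have hqN : q < m N :=
    hq_mem.2.trans_le (h.strictMono.monotone (Nat.succ_le_of_lt (not_le.1 hiN)))
  rw [Rosendal.mem_tail.1 hvN q hqN] at hcoeff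
  exact mul_ne_zero (Finsupp.mem_support_iff.1 hi) hq hcoeff.symm

lemma comp {ι : ℕ → ℕ} (h : BlocksAt x m) (hι : StrictMono ι) :
    BlocksAt (x ∘ ι) (m ∘ ι) where
  strictMono := h.strictMono.comp hι
  ne_zero n := h.ne_zero (ι n)
  mem_supported n := Finsupp.supported_mono
    (Set.Ico_subset_Ico_right (h.strictMono.monotone (hι n.lt_succ_self))) (h.mem_supported (ι n))

lemma smul {c : ℕ → k} (h : BlocksAt x m) (hc : ∀ n, c n ≠ 0) :
    BlocksAt (fun n => c n • x n) m where
  strictMono := h.strictMono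
  ne_zero n := smul_ne_zero (hc n) (h.ne_zero n)
  mem_supported n := Submodule.smul_mem _ _ (h.mem_supported n)

end BlocksAt

lemma exists_blocksAt (X : ℕ → Submodule k (ℕ →₀ k)) (hX : ∀ n, MeetsTails (X n)) :
    ∃ x m, BlocksAt x m ∧ ∀ n, x n ∈ X n := by
  choose v hv hv0 using hX
  let endpoint (n a : ℕ) : ℕ := max a ((v n a).support.sup id) + 1
  let m : ℕ → ℕ := fun n => Nat.rec 0 endpoint n
  refine ⟨fun n => v n (m n), m, ⟨strictMono_nat_of_lt_succ fun n => ?_, fun n => hv0 n _,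
    fun n => ?_⟩, fun n => (hv n _).1⟩
  · exact Nat.lt_succ_of_le (le_max_left _ _)
  · refine (Finsupp.mem_supported k _).2 fun i hi => ⟨?_, ?_⟩
    · exact (Finsupp.mem_supported k _).1 (hv n _).2 hi
    · exact Nat.lt_succ_of_le ((Finset.le_sup (f := id) hi).trans (le_max_right _ _))

-- Fusion: take a decreasing sequence of subspaces, each settling one more property, and choose a
-- block sequence whose `n`-th vector lies in the `n`-th of them.
lemma exists_forall_of_dense {ι : Type*} [Countable ι] {D : ι → Submodule k (ℕ →₀ k) → Prop}
    (hD : ∀ i X Y, D i X → AlmostLE Y X → D i Y) {X : Submodule k (ℕ →₀ k)} (hX : MeetsTails X)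
    (dense : ∀ i, ∀ Y ≤ X, MeetsTails Y → ∃ Z ≤ Y, MeetsTails Z ∧ D i Z) :
    ∃ Y ≤ X, MeetsTails Y ∧ ∀ i, D i Y := by
  rcases isEmpty_or_nonempty ι with hι | hι
  · exact ⟨X, le_rfl, hX, isEmptyElim⟩
  obtain ⟨enum, enum_surjective⟩ := exists_surjective_nat ι
  have refinement (n : ℕ) (Y : {Y // Y ≤ X ∧ MeetsTails Y}) :
      ∃ Z : {Z // Z ≤ X ∧ MeetsTails Z}, Z.1 ≤ Y.1 ∧ D (enum n) Z.1 := by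
    obtain ⟨Z, hZY, hZ, hDZ⟩ := dense (enum n) Y.1 Y.2.1 Y.2.2
    exact ⟨⟨Z, hZY.trans Y.2.1, hZ⟩, hZY, hDZ⟩
  choose next next_le next_spec using refinement
  let V : ℕ → {Y // Y ≤ X ∧ MeetsTails Y} := fun n => Nat.rec ⟨X, le_rfl, hX⟩ next n
  have V_anti : Antitone fun n => (V n).1 := antitone_nat_of_succ_le fun n => next_le n (V n)
  obtain ⟨x, m, hx, hxV⟩ := exists_blocksAt (fun n => (V n).1) fun n => (V n).2.2
  refine ⟨Submodule.span k (Set.range x), ?_, hx.meetsTails_span, fun i => ?_⟩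
  · exact Submodule.span_le.2 (Set.range_subset_iff.2 fun n => (V n).2.1 (hxV n))
  · obtain ⟨n, rfl⟩ := enum_surjective i
    refine hD _ _ _ (next_spec n (V n)) ⟨m (n + 1), (hx.span_inf_tail_le (n + 1)).trans ?_⟩
    exact Submodule.span_le.2 (Set.image_subset_iff.2 fun j hj => V_anti hj (hxV j))

end Tails

section Games

variable {k : Type*} [DivisionRing k]

/-- A position in a game on finitely supported sequences. In each round player I lists finitely
many vectors, appended to `left`, and player II answers with equally many, appended to `right`,
which lie in the span of `pool`, the vectors player II has uncovered so far. -/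
@[ext]
structure Position (k : Type*) [DivisionRing k] where
  left : List (ℕ →₀ k)
  right : List (ℕ →₀ k)
  pool : List (ℕ →₀ k)

namespace Position

instance [Countable k] : Countable (Position k) :=
  Function.Injective.countable (f := fun p : Position k => (p.left, p.right, p.pool))
    fun p q h => by
      simp only [Prod.mk.injEq] at h
      exact Position.ext h.1 h.2.1 h.2.2

/-- The initial position. -/
def start : Position k := ⟨[], [], []⟩

/-- The position reached from `p` when player I lists `u`, and player II uncovers `g` and
answers `v`. -/
def play (p : Position k) (u g v : List (ℕ →₀ k)) : Position k :=
  ⟨p.left ++ u, p.right ++ v, p.pool ++ g⟩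

end Position

variable (E : List (ℕ →₀ k) → List (ℕ →₀ k) → Prop)

/-- At the position `p`, player II may answer the move `u` of player I by uncovering the vectors
`g` of `Z` and playing `v`: the lists played then satisfy the rule `E` of the game. -/
structure IsReply (p : Position k) (u : List (ℕ →₀ k)) (Z : Submodule k (ℕ →₀ k))
    (g v : List (ℕ →₀ k)) : Prop where
  mem : ∀ w ∈ g, w ∈ Z
  mem_span : ∀ w ∈ v, w ∈ Submodule.span k {w | w ∈ p.pool ++ g}
  length_eq : v.length = u.length
  rel : E (p.left ++ u) (p.right ++ v)

/-- Player II can answer `u` inside any given subspace of `X` so as to reach `P`. -/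
def SecondCanReach (X : Submodule k (ℕ →₀ k)) (P : Position k → Prop) (p : Position k)
    (u : List (ℕ →₀ k)) : Prop :=
  ∀ Y ≤ X, MeetsTails Y → ∃ g v, IsReply E p u Y g v ∧ P (p.play u g v)

/-- After playing `u`, player I can name a tail of `X` such that all answers of player II there
lead to `P`. -/
def FirstCanForce (X : Submodule k (ℕ →₀ k)) (P : Position k → Prop) (p : Position k)
    (u : List (ℕ →₀ k)) : Prop :=
  ∃ n, ∀ g v, IsReply E p u (X ⊓ tail k n) g v → P (p.play u g v)

/-- Player II wins the game from `p` when she may restrict player I to tails of `X`, he may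
restrict her to subspaces of `X`, and he has to lower the ordinal `ξ` in each round. A player who
cannot move loses. -/
def SecondWins (X : Submodule k (ℕ →₀ k)) (ξ : Ordinal) (p : Position k) : Prop :=
  ∃ n, ∀ u : List (ℕ →₀ k), (∀ w ∈ u, w ∈ X ⊓ tail k n) →
    ∀ η < ξ, SecondCanReach E X (SecondWins X η) p u
termination_by ξ

/-- Player I wins the game from `p` when he may restrict player II to tails of `X`, she may
restrict him to subspaces of `X`, and he has to lower the ordinal `ξ` in each round. A player who
cannot move loses. -/
def FirstWins (X : Submodule k (ℕ →₀ k)) (ξ : Ordinal) (p : Position k) : Prop :=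
  ∀ Y ≤ X, MeetsTails Y → ∃ u : List (ℕ →₀ k), (∀ w ∈ u, w ∈ Y) ∧
    ∃ η, ∃ _ : η < ξ, FirstCanForce E X (FirstWins X η) p u
termination_by ξ

variable {E} {X Y : Submodule k (ℕ →₀ k)}

lemma IsReply.mono {p : Position k} {u g v : List (ℕ →₀ k)} (h : IsReply E p u X g v)
    (hXY : X ≤ Y) : IsReply E p u Y g v :=
  { h with mem := fun w hw => hXY (h.mem w hw) }

lemma SecondCanReach.mono {P Q : Position k → Prop} {p : Position k} {u : List (ℕ →₀ k)}
    (h : SecondCanReach E X P p u) (hYX : AlmostLE Y X) (hPQ : ∀ q, P q → Q q) :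
    SecondCanReach E Y Q p u := by
  obtain ⟨m, hm⟩ := hYX
  intro Z hZY hZ
  obtain ⟨g, v, hgv, hP⟩ :=
    h (Z ⊓ tail k m) ((inf_le_inf_right _ hZY).trans hm) (hZ.inf_tail m)
  exact ⟨g, v, hgv.mono inf_le_left, hPQ _ hP⟩

lemma FirstCanForce.mono {P Q : Position k → Prop} {p : Position k} {u : List (ℕ →₀ k)}
    (h : FirstCanForce E X P p u) (hYX : AlmostLE Y X) (hPQ : ∀ q, P q → Q q) :
    FirstCanForce E Y Q p u := by
  obtain ⟨n, hn⟩ := h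
  obtain ⟨m, hm⟩ := hYX.exists_inf_tail_le n
  exact ⟨m, fun g v hgv => hPQ _ (hn g v (hgv.mono hm))⟩

lemma SecondWins.mono (hYX : AlmostLE Y X) {ξ : Ordinal} {p : Position k}
    (h : SecondWins E X ξ p) : SecondWins E Y ξ p := by
  induction ξ using WellFoundedLT.induction generalizing p with
  | ind ξ ih =>
    rw [SecondWins] at h ⊢
    obtain ⟨n, hn⟩ := h
    obtain ⟨m, hm⟩ := hYX.exists_inf_tail_le n
    exact ⟨m, fun u hu η hη =>
      (hn u (fun w hw => hm (hu w hw)) η hη).mono hYX fun q => ih η hη⟩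

lemma FirstWins.mono (hYX : AlmostLE Y X) {ξ : Ordinal} {p : Position k}
    (h : FirstWins E X ξ p) : FirstWins E Y ξ p := by
  induction ξ using WellFoundedLT.induction generalizing p with
  | ind ξ ih =>
    rw [FirstWins] at h ⊢
    obtain ⟨m, hm⟩ := id hYX
    intro Z hZY hZ
    obtain ⟨u, hu, η, hη, hforce⟩ :=
      h (Z ⊓ tail k m) ((inf_le_inf_right _ hZY).trans hm) (hZ.inf_tail m)
    exact ⟨u, fun w hw => (hu w hw).1, η, hη, hforce.mono hYX fun q => ih η hη⟩

variable (E) in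
/-- One of the players wins the game from `p`. -/
def Decided (ξ : Ordinal) (p : Position k) (X : Submodule k (ℕ →₀ k)) : Prop :=
  SecondWins E X ξ p ∨ FirstWins E X ξ p

lemma Decided.mono {ξ : Ordinal} {p : Position k} (h : Decided E ξ p X) (hYX : AlmostLE Y X) :
    Decided E ξ p Y :=
  h.imp (.mono hYX) (.mono hYX)

lemma exists_secondCanReach_or_firstCanForce {η : Ordinal} {p : Position k}
    (u : List (ℕ →₀ k)) (hX : MeetsTails X) (hdec : ∀ q, Decided E η q X) :
    ∃ Y ≤ X, MeetsTails Y ∧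
      (SecondCanReach E Y (SecondWins E Y η) p u ∨ FirstCanForce E Y (FirstWins E Y η) p u) := by
  by_cases hreach : SecondCanReach E X (SecondWins E X η) p u
  · exact ⟨X, le_rfl, hX, .inl hreach⟩
  · simp only [SecondCanReach] at hreach
    push Not at hreach
    obtain ⟨Y, hYX, hY, hno⟩ := hreach
    refine ⟨Y, hYX, hY, .inr ⟨0, fun g v hgv => ?_⟩⟩
    exact ((hdec _).resolve_left (hno g v (hgv.mono inf_le_left))).mono (.of_le hYX)

lemma exists_decided_of_forall_move {ξ : Ordinal} {p : Position k} (hX : MeetsTails X)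
    (hmove : ∀ u, ∀ η < ξ, SecondCanReach E X (SecondWins E X η) p u ∨
      FirstCanForce E X (FirstWins E X η) p u) :
    ∃ Y ≤ X, MeetsTails Y ∧ Decided E ξ p Y := by
  by_cases hsecond : ∃ Y ≤ X, MeetsTails Y ∧ ∀ u : List (ℕ →₀ k), (∀ w ∈ u, w ∈ Y) →
      ∀ η < ξ, SecondCanReach E X (SecondWins E X η) p u
  · obtain ⟨Y, hYX, hY, h⟩ := hsecond
    refine ⟨Y, hYX, hY, .inl ?_⟩
    rw [SecondWins]
    exact ⟨0, fun u hu η hη => (h u (fun w hw => (hu w hw).1) η hη).mono (.of_le hYX)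
      fun q => .mono (.of_le hYX)⟩
  · refine ⟨X, le_rfl, hX, .inr ?_⟩
    rw [FirstWins]
    intro Y hYX hY
    push Not at hsecond
    obtain ⟨u, hu, η, hη, hno⟩ := hsecond Y hYX hY
    exact ⟨u, hu, η, hη, (hmove u η hη).resolve_left hno⟩

lemma exists_decided [Countable k] {ξ : Ordinal} (hξ : (Set.Iio ξ).Countable)
    (p : Position k) (hX : MeetsTails X) :
    ∃ Y ≤ X, MeetsTails Y ∧ Decided E ξ p Y := by
  induction ξ using WellFoundedLT.induction generalizing p X with
  | ind ξ ih =>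
    have : Countable (Set.Iio ξ) := hξ.to_subtype
    obtain ⟨X₁, hX₁X, hX₁, hdec⟩ := exists_forall_of_dense
      (D := fun (i : Set.Iio ξ × Position k) => Decided E i.1 i.2)
      (fun i _ _ h hle => h.mono hle) hX fun i Y _ hY =>
        ih i.1 i.1.2 (hξ.mono (Set.Iio_subset_Iio i.1.2.le)) i.2 hY
    obtain ⟨X₂, hX₂X, hX₂, hmove⟩ := exists_forall_of_dense
      (D := fun (i : Set.Iio ξ × List (ℕ →₀ k)) Z =>
        SecondCanReach E Z (SecondWins E Z i.1) p i.2 ∨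
          FirstCanForce E Z (FirstWins E Z i.1) p i.2)
      (fun i _ _ h hle => h.imp (·.mono hle fun _ => .mono hle) (·.mono hle fun _ => .mono hle))
      hX₁ fun i Y hY hYt => exists_secondCanReach_or_firstCanForce i.2 hYt fun q =>
        (hdec (i.1, q)).mono (.of_le hY)
    obtain ⟨Y, hYX₂, hY, hY_dec⟩ :=
      exists_decided_of_forall_move hX₂ fun u η hη => hmove (⟨η, hη⟩, u)
    exact ⟨Y, hYX₂.trans (hX₂X.trans hX₁X), hY, hY_dec⟩

lemma exists_blocksAt_decided [Countable k] {ξ : Ordinal} (hξ : (Set.Iio ξ).Countable)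
    {ι : Type*} [Countable ι] (E : ι → List (ℕ →₀ k) → List (ℕ →₀ k) → Prop) (p : Position k) :
    ∃ x m, BlocksAt x m ∧ ∀ i, Decided (E i) ξ p (Submodule.span k (Set.range x)) := by
  obtain ⟨X, -, hX, hdec⟩ := exists_forall_of_dense (D := fun i => Decided (E i) ξ p)
    (fun i _ _ h hle => h.mono hle) meetsTails_top fun i Y _ hY => exists_decided hξ p hY
  obtain ⟨x, m, hx, hxX⟩ := exists_blocksAt (fun _ => X) fun _ => hX
  exact ⟨x, m, hx, fun i => (hdec i).mono
    (.of_le (Submodule.span_le.2 (Set.range_subset_iff.2 hxX)))⟩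

end Games

section RankTrees

universe u v

variable {A : Type u} {B : Type v} {T : Set (List A)}

/-- The node `l` of the tree `T` has rank at least `β`. -/
def RankGE (T : Set (List A)) (β : Ordinal) (l : List A) : Prop :=
  l ∈ T ∧ ∀ γ, ∀ _ : γ < β, ∃ w, RankGE T γ (l ++ [w])
termination_by β

namespace RankGE

lemma mem {β : Ordinal} {l : List A} (h : RankGE T β l) : l ∈ T := by
  rw [RankGE] at h
  exact h.1

lemma exists_append {β γ : Ordinal} {l : List A} (h : RankGE T β l) (hγ : γ < β) :
    ∃ w, RankGE T γ (l ++ [w]) := by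
  rw [RankGE] at h
  exact h.2 γ hγ

lemma anti {β γ : Ordinal} {l : List A} (h : RankGE T β l) (hγ : γ ≤ β) : RankGE T γ l := by
  rw [RankGE]
  exact ⟨h.mem, fun δ hδ => h.exists_append (hδ.trans_le hγ)⟩

lemma of_invariant {R : Ordinal → List A → Prop}
    (hR : ∀ β l, R β l → l ∈ T ∧ ∀ γ < β, ∃ w, R γ (l ++ [w])) {β : Ordinal} {l : List A}
    (h : R β l) : RankGE T β l := by
  induction β using WellFoundedLT.induction generalizing l with
  | ind β ih =>
    rw [RankGE]
    refine ⟨(hR β l h).1, fun γ hγ => ?_⟩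
    obtain ⟨w, hw⟩ := (hR β l h).2 γ hγ
    exact ⟨w, ih γ hγ hw⟩

lemma map {T' : Set (List B)} (f : A → B) (hf : ∀ l ∈ T, l.map f ∈ T') {β : Ordinal} {l : List A}
    (h : RankGE T β l) : RankGE T' β (l.map f) := by
  refine of_invariant (R := fun β l' => ∃ l, RankGE T β l ∧ l.map f = l') ?_ ⟨l, h, rfl⟩
  rintro β _ ⟨l, hl, rfl⟩
  refine ⟨hf l hl.mem, fun γ hγ => ?_⟩
  obtain ⟨w, hw⟩ := hl.exists_append hγ
  exact ⟨f w, l ++ [w], hw, by simp⟩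

lemma mono {T' : Set (List A)} (hT : T ⊆ T') {β : Ordinal} {l : List A} (h : RankGE T β l) :
    RankGE T' β l := by
  simpa using h.map (T' := T') id fun l hl => by simpa using hT hl

lemma exists_append_length {β : Ordinal} (m : ℕ) {l : List A} (h : RankGE T (β + m) l) :
    ∃ l' : List A, l'.length = m ∧ RankGE T β (l ++ l') := by
  induction m generalizing l with
  | zero => exact ⟨[], rfl, by simpa using h⟩
  | succ m ih =>
    have hlt : β + m < β + (m + 1 : ℕ) := by gcongr; exact m.lt_succ_self
    obtain ⟨w, hw⟩ := h.exists_append hlt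
    obtain ⟨l', hl', hR⟩ := ih hw
    exact ⟨w :: l', by simp [hl'], by simpa using hR⟩

lemma exists_append_length_of_lt {ξ η : Ordinal} {l : List A}
    (h : RankGE T (Ordinal.omega0 * ξ) l) (hη : η < ξ) (m : ℕ) :
    ∃ l' : List A, l'.length = m ∧ RankGE T (Ordinal.omega0 * η) (l ++ l') := by
  refine exists_append_length m (h.anti ?_)
  calc Ordinal.omega0 * η + m ≤ Ordinal.omega0 * η + Ordinal.omega0 := by
        gcongr; exact (Ordinal.natCast_lt_omega0 m).le
    _ = Ordinal.omega0 * Order.succ η := (Ordinal.mul_succ _ _).symm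
    _ ≤ _ := by gcongr; exact Order.succ_le_of_lt hη

end RankGE

/-- The relation on the nodes of `T` used in `treeRank`: `t` is a proper end-extension of `s`. -/
def ProperlyExtends (T : Set (List A)) (t s : T) : Prop := s.val <+: t.val ∧ s.val ≠ t.val

lemma properlyExtends_append_singleton {s : T} {w : A} (hw : s.val ++ [w] ∈ T) :
    ProperlyExtends T ⟨s.val ++ [w], hw⟩ s :=
  ⟨List.prefix_append _ _, by simp⟩

lemma ProperlyExtends.exists_append_singleton (hT : ∀ l l', l <+: l' → l' ∈ T → l ∈ T) {s t : T}
    (h : ProperlyExtends T t s) : ∃ (w : A) (hw : s.val ++ [w] ∈ T),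
      t = ⟨s.val ++ [w], hw⟩ ∨ ProperlyExtends T t ⟨s.val ++ [w], hw⟩ := by
  obtain ⟨⟨l, hl⟩, hne⟩ := h
  cases l with
  | nil => exact absurd (by simpa using hl) hne
  | cons w l =>
    have hle : s.val ++ [w] <+: t.val := ⟨l, by simpa using hl⟩
    refine ⟨w, hT _ _ hle t.2, ?_⟩
    by_cases heq : t.val = s.val ++ [w]
    · exact .inl (Subtype.ext heq)
    · exact .inr ⟨hle, Ne.symm heq⟩

lemma RankGE.le_rank {β : Ordinal.{u}} {s : T} (h : RankGE T β s.val)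
    (hs : Acc (ProperlyExtends T) s) : β ≤ hs.rank := by
  induction β using WellFoundedLT.induction generalizing s with
  | ind β ih =>
    refine le_of_forall_lt fun γ hγ => ?_
    obtain ⟨w, hw⟩ := h.exists_append hγ
    have hext := properlyExtends_append_singleton hw.mem
    exact (ih γ hγ (s := ⟨_, hw.mem⟩) hw (hs.inv hext)).trans_lt (Acc.rank_lt_of_rel hs hext)

lemma rankGE_iff (hT : ∀ l l', l <+: l' → l' ∈ T → l ∈ T) {β : Ordinal.{u}} (s : T) :
    RankGE T β s.val ↔ ∀ hs : Acc (ProperlyExtends T) s, β ≤ hs.rank := by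
  refine ⟨fun h => h.le_rank, fun h => RankGE.of_invariant (R := fun β l => ∃ hl : l ∈ T,
    ∀ hs : Acc (ProperlyExtends T) ⟨l, hl⟩, β ≤ hs.rank) ?_ ⟨s.2, h⟩⟩
  rintro β l ⟨hl, hβ⟩
  refine ⟨hl, fun γ hγ => ?_⟩
  obtain ⟨t, ht, htγ⟩ : ∃ t, ProperlyExtends T t ⟨l, hl⟩ ∧
      ∀ h : Acc (ProperlyExtends T) t, γ ≤ h.rank := by
    by_contra! hno
    have hacc : Acc (ProperlyExtends T) ⟨l, hl⟩ := ⟨_, fun t ht => (hno t ht).1⟩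
    refine (hβ hacc).not_gt (lt_of_le_of_lt ?_ hγ)
    rw [Acc.rank_eq]
    exact Ordinal.iSup_le fun t => Order.succ_le_of_lt (hno t.1 t.2).2
  obtain ⟨w, hw, rfl | hext⟩ := ht.exists_append_singleton hT
  · exact ⟨w, hw, htγ⟩
  · exact ⟨w, hw, fun h => (htγ (h.inv hext)).trans (Acc.rank_lt_of_rel h hext).le⟩

end RankTrees

lemma lt_treeRank_iff {𝒲 : Type} {T : Set (List 𝒲)} (hnil : [] ∈ T)
    (hT : ∀ l l', l <+: l' → l' ∈ T → l ∈ T) (β : Ordinal) :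
    β < treeRank T ↔ RankGE T β [] := by
  have root (s : T) : s = ⟨[], hnil⟩ ∨ ProperlyExtends T s ⟨[], hnil⟩ :=
    (eq_or_ne s.val []).imp Subtype.ext fun h => ⟨⟨s.val, rfl⟩, h.symm⟩
  change _ ↔ RankGE T β (⟨[], hnil⟩ : T).val
  rw [rankGE_iff hT, treeRank]
  split_ifs with h
  · rw [WithTop.coe_lt_coe, Ordinal.lt_iSup_iff]
    refine ⟨fun ⟨s, hs⟩ hacc => (Order.lt_succ_iff.1 hs).trans ?_, fun hβ =>
      ⟨⟨[], hnil⟩, Order.lt_succ_iff.2 (hβ _)⟩⟩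
    rcases root s with rfl | hs
    · rfl
    · exact (Acc.rank_lt_of_rel hacc hs).le
  · refine iff_of_true (WithTop.coe_lt_top β) fun hacc => absurd ⟨fun s => ?_⟩ h
    rcases root s with rfl | hs
    exacts [hacc, hacc.inv hs]

section CombPairs

variable {R M N : Type*} [Semiring R] [AddCommMonoid M] [AddCommMonoid N] [Module R M] [Module R N]
  {m n : ℕ} {x x' : ℕ → M} {y y' : ℕ → N}

variable (R) in
/-- The pairs consisting of a linear combination of `x 0, …, x (n - 1)` and the linear combination
of `y 0, …, y (n - 1)` with the same coefficients. -/
def combPairs (n : ℕ) (x : ℕ → M) (y : ℕ → N) : Submodule R (M × N) :=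
  Submodule.span R ((fun i => (x i, y i)) '' Set.Iio n)

lemma mem_combPairs {p : M × N} : p ∈ combPairs R n x y ↔
    ∃ a : ℕ → R, (∑ i ∈ Finset.range n, a i • x i, ∑ i ∈ Finset.range n, a i • y i) = p := by
  rw [combPairs, ← Finset.coe_range, Submodule.mem_span_image_finset_iff_exists_fun']
  simp only [Prod.ext_iff, Prod.fst_sum, Prod.snd_sum, Prod.smul_mk]

lemma apply_mem_combPairs {i : ℕ} (hi : i < n) : (x i, y i) ∈ combPairs R n x y :=
  Submodule.subset_span ⟨i, hi, rfl⟩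

lemma combPairs_le {P : Submodule R (M × N)} (h : ∀ i < n, (x i, y i) ∈ P) :
    combPairs R n x y ≤ P :=
  Submodule.span_le.2 (Set.image_subset_iff.2 h)

lemma combPairs_mono (hmn : m ≤ n) (hx : ∀ i < m, x' i = x i) (hy : ∀ i < m, y' i = y i) :
    combPairs R m x y ≤ combPairs R n x' y' :=
  combPairs_le fun i hi => by
    rw [← hx i hi, ← hy i hi]
    exact apply_mem_combPairs (hi.trans_le hmn)

lemma swap_mem_combPairs {p : M × N} (h : p ∈ combPairs R n x y) :
    p.swap ∈ combPairs R n y x := by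
  obtain ⟨a, rfl⟩ := mem_combPairs.1 h
  exact mem_combPairs.2 ⟨a, rfl⟩

lemma snd_mem_of_mem_combPairs {p : M × N} (h : p ∈ combPairs R n x y) {Z : Submodule R N}
    (hy : ∀ i < n, y i ∈ Z) : p.2 ∈ Z :=
  combPairs_le (P := Z.comap (LinearMap.snd R M N)) hy h

lemma exists_mem_combPairs (y : ℕ → N) {v : M} (hv : v ∈ Submodule.span R (x '' Set.Iio n)) :
    ∃ w, (v, w) ∈ combPairs R n x y := by
  rw [← Finset.coe_range, Submodule.mem_span_image_finset_iff_exists_fun'] at hv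
  obtain ⟨a, rfl⟩ := hv
  exact ⟨_, mem_combPairs.2 ⟨a, rfl⟩⟩

end CombPairs

section Entries

variable {M N : Type*} [Zero M] [Zero N]

/-- The `i`-th entry of a list of vectors, with value `0` past its end. -/
abbrev entry (l : List M) (i : ℕ) : M := l.getD i 0

lemma entry_map {f : M → N} (hf : f 0 = 0) (l : List M) (i : ℕ) :
    entry (l.map f) i = f (entry l i) := by
  rw [entry, ← hf, List.getD_map]

lemma entry_append {l l' : List M} {i : ℕ} (hi : i < l.length) :
    entry (l ++ l') i = entry l i :=
  List.getD_append _ _ _ _ hi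

lemma entry_eq_getElem {l : List M} {i : ℕ} (hi : i < l.length) : entry l i = l[i] :=
  List.getD_eq_getElem _ _ hi

lemma entry_mem {l : List M} {i : ℕ} (hi : i < l.length) : entry l i ∈ l :=
  entry_eq_getElem hi ▸ List.getElem_mem hi

lemma rel_entry {r : M → N → Prop} {l : List M} {l' : List N} (h : List.Forall₂ r l l') {i : ℕ}
    (hi : i < l.length) : r (entry l i) (entry l' i) := by
  have hi' : i < l'.length := h.length_eq ▸ hi
  rw [entry_eq_getElem hi, entry_eq_getElem hi']
  exact (List.forall₂_iff_get.1 h).2 i hi hi'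

lemma mem_span_entry_image {k M : Type*} [Semiring k] [AddCommMonoid M] [Module k M] {l : List M}
    {v : M} (hv : v ∈ Submodule.span k {w | w ∈ l}) :
    v ∈ Submodule.span k (entry l '' Set.Iio l.length) := by
  refine Submodule.span_mono (fun w hw => ?_) hv
  obtain ⟨i, hi, rfl⟩ := List.getElem_of_mem hw
  exact ⟨i, hi, entry_eq_getElem hi⟩

end Entries

section SeqEquiv

variable {𝒲 : Type} [NormedAddCommGroup 𝒲] [NormedSpace ℝ 𝒲] {K L : ℝ} {m n : ℕ}
  {x y z x' y' : ℕ → 𝒲}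

lemma seqEquiv_iff : SeqEquiv K n x y ↔
    ∀ p ∈ combPairs ℝ n x y, 1 / K * ‖p.1‖ ≤ ‖p.2‖ ∧ ‖p.2‖ ≤ K * ‖p.1‖ := by
  refine ⟨fun h p hp => ?_, fun h a => h _ (mem_combPairs.2 ⟨a, rfl⟩)⟩
  obtain ⟨a, rfl⟩ := mem_combPairs.1 hp
  exact h a

lemma seqEquiv_iff_of_pos (hK : 0 < K) : SeqEquiv K n x y ↔
    ∀ p ∈ combPairs ℝ n x y, ‖p.1‖ ≤ K * ‖p.2‖ ∧ ‖p.2‖ ≤ K * ‖p.1‖ := by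
  simp_rw [seqEquiv_iff, one_div, inv_mul_le_iff₀ hK]

namespace SeqEquiv

lemma of_combPairs_le (h : SeqEquiv K n x y) (hle : combPairs ℝ m x' y' ≤ combPairs ℝ n x y) :
    SeqEquiv K m x' y' :=
  seqEquiv_iff.2 fun p hp => seqEquiv_iff.1 h p (hle hp)

lemma symm (hK : 0 < K) (h : SeqEquiv K n x y) : SeqEquiv K n y x := by
  rw [seqEquiv_iff_of_pos hK] at h ⊢
  exact fun p hp => (h _ (swap_mem_combPairs hp)).symm

lemma trans (hK : 0 < K) (hL : 0 < L) (hxy : SeqEquiv K n x y) (hyz : SeqEquiv L n y z) :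
    SeqEquiv (K * L) n x z := by
  intro a
  obtain ⟨h₁, h₂⟩ := hxy a
  obtain ⟨h₃, h₄⟩ := hyz a
  rw [one_div, inv_mul_le_iff₀ (by positivity)] at *
  constructor
  · calc _ ≤ _ := h₁
      _ ≤ K * (L * _) := by gcongr
      _ = _ := by ring
  · calc _ ≤ _ := h₄
      _ ≤ L * (K * _) := by gcongr
      _ = _ := by ring

lemma mono (hK : 0 < K) (hKL : K ≤ L) (h : SeqEquiv K n x y) : SeqEquiv L n x y := by
  rw [seqEquiv_iff_of_pos hK] at h
  rw [seqEquiv_iff_of_pos (hK.trans_le hKL)]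
  exact fun p hp => ⟨(h p hp).1.trans (by gcongr), (h p hp).2.trans (by gcongr)⟩

end SeqEquiv

end SeqEquiv

section EmbTree

variable {𝒲 : Type} [NormedAddCommGroup 𝒲] [NormedSpace ℝ 𝒲]

lemma nil_mem_embTree (x : ℕ → 𝒲) (Y : Set 𝒲) (K : ℝ) : [] ∈ embTree x Y K :=
  ⟨by simp, fun a => by simp⟩

lemma mem_embTree_of_isPrefix {x : ℕ → 𝒲} {Y : Set 𝒲} {K : ℝ} (l l' : List 𝒲) (h : l <+: l')
    (hl' : l' ∈ embTree x Y K) : l ∈ embTree x Y K := by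
  obtain ⟨w, rfl⟩ := h
  exact ⟨fun v hv => hl'.1 v (List.mem_append_left w hv), hl'.2.of_combPairs_le
    (combPairs_mono (by simp) (fun i hi => entry_append hi) fun _ _ => rfl)⟩

lemma lt_embIndex_iff {x : ℕ → 𝒲} {Y : Set 𝒲} {β : Ordinal} :
    (β : WithTop Ordinal) < embIndex x Y ↔ ∃ K : ℝ, 1 ≤ K ∧ RankGE (embTree x Y K) β [] := by
  simp_rw [← lt_treeRank_iff (nil_mem_embTree x Y _) mem_embTree_of_isPrefix]
  rw [embIndex]
  split_ifs with htop
  · obtain ⟨K, hK, hrank⟩ := htop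
    exact iff_of_true (WithTop.coe_lt_top β) ⟨K, hK, hrank ▸ WithTop.coe_lt_top β⟩
  · push Not at htop
    rw [WithTop.coe_lt_coe, lt_csSup_iff]
    · constructor
      · rintro ⟨o, ⟨K, hK, ho⟩, hβ⟩
        exact ⟨K, hK, ho ▸ WithTop.coe_lt_coe.2 hβ⟩
      · rintro ⟨K, hK, hβ⟩
        obtain ⟨o, ho⟩ := WithTop.ne_top_iff_exists.1 (htop K hK)
        exact ⟨o, ⟨K, hK, ho⟩, WithTop.coe_lt_coe.1 (ho ▸ hβ)⟩
    · refine (Ordinal.bddAbove_of_small (s := Set.range fun K : ℝ =>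
        (treeRank (embTree x Y K)).untopD 0)).mono ?_
      rintro o ⟨K, -, hK⟩
      exact ⟨K, by simp [← hK]⟩
    · obtain ⟨o, ho⟩ := WithTop.ne_top_iff_exists.1 (htop 1 le_rfl)
      exact ⟨o, 1, le_rfl, ho⟩

end EmbTree

section CoordTree

variable {𝒲 : Type} [NormedAddCommGroup 𝒲] [NormedSpace ℝ 𝒲] {𝔽 : Subfield ℝ}
  (φ : (ℕ →₀ 𝔽) →ₗ[𝔽] 𝒲)

lemma map_mem_combPairs {M N : Type*} [AddCommGroup M] [AddCommGroup N] [Module 𝔽 M] [Module 𝔽 N]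
    (f : M →ₗ[𝔽] 𝒲) (g : N →ₗ[𝔽] 𝒲) {n : ℕ} {x : ℕ → M} {y : ℕ → N} {p : M × N}
    (h : p ∈ combPairs 𝔽 n x y) :
    (f p.1, g p.2) ∈ combPairs ℝ n (fun i => f (x i)) fun i => g (y i) :=
  combPairs_le (P := ((combPairs ℝ n _ _).restrictScalars 𝔽).comap (f.prodMap g))
    (fun _ hi => apply_mem_combPairs hi) h

lemma SeqEquiv.of_mem_combPairs {M : Type*} [AddCommGroup M] [Module 𝔽 M] {f : M →ₗ[𝔽] 𝒲} {K : ℝ}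
    {m n : ℕ} {S T P Q : ℕ → M} (h : SeqEquiv K n (fun i => f (S i)) fun i => f (T i))
    (hPQ : ∀ i < m, (P i, Q i) ∈ combPairs 𝔽 n S T) :
    SeqEquiv K m (fun i => f (P i)) fun i => f (Q i) :=
  h.of_combPairs_le (combPairs_le fun i hi => map_mem_combPairs f f (hPQ i hi))

/-- The rule of the games: the images under `φ` of the lists `s` and `t` are `K`-equivalent. -/
def ListEquiv (K : ℝ) (s t : List (ℕ →₀ 𝔽)) : Prop :=
  SeqEquiv K s.length (fun i => φ (entry s i)) fun i => φ (entry t i)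

/-- The tree `T((φ (y n)), φ '' Z, K)` in terms of the coordinates of the vectors. -/
def coordTree (y : ℕ → ℕ →₀ 𝔽) (Z : Submodule 𝔽 (ℕ →₀ 𝔽)) (K : ℝ) : Set (List (ℕ →₀ 𝔽)) :=
  {l | (∀ v ∈ l, v ∈ Z) ∧ SeqEquiv K l.length (fun i => φ (entry l i)) fun i => φ (y i)}

variable {φ} {y : ℕ → ℕ →₀ 𝔽} {Z : Submodule 𝔽 (ℕ →₀ 𝔽)} {K : ℝ} {β : Ordinal}

lemma listEquiv_nil : ListEquiv φ K [] [] := fun a => by simp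

lemma RankGE.map_coordTree (h : RankGE (coordTree φ y Z K) β []) :
    RankGE (embTree (fun i => φ (y i)) (φ '' Z) K) β [] := by
  refine h.map (T' := embTree (fun i => φ (y i)) (φ '' Z) K) φ fun l hl => ⟨?_, ?_⟩
  · simpa using fun v hv => ⟨v, hl.1 v hv, rfl⟩
  · simpa only [List.length_map, entry_map (map_zero φ)] using hl.2

lemma RankGE.coordTree_of_map (hφ : Function.Injective φ)
    (h : RankGE (embTree (fun i => φ (y i)) (φ '' Z) K) β []) :
    RankGE (coordTree φ y Z K) β [] := by
  have left_inv : Function.LeftInverse (Function.invFun φ) φ := Function.leftInverse_invFun hφ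
  have map_inv {w : 𝒲} (hw : w ∈ φ '' Z) :
      Function.invFun φ w ∈ Z ∧ φ (Function.invFun φ w) = w := by
    obtain ⟨v, hv, rfl⟩ := hw
    exact ⟨(left_inv v).symm ▸ hv, by rw [left_inv v]⟩
  refine h.map (T' := coordTree φ y Z K) (Function.invFun φ) fun l hl => ⟨?_, ?_⟩
  · simpa using fun w hw => (map_inv (hl.1 w hw)).1
  · refine hl.2.of_combPairs_le (combPairs_mono (by simp) (fun i hi => ?_) fun _ _ => rfl)
    have hi : i < l.length := by simpa using hi
    rw [entry_map (by simpa using left_inv 0)]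
    exact ((map_inv (hl.1 _ (entry_mem hi))).2).symm

lemma coordTree_mono {L : ℝ} (hK : 0 < K) (hKL : K ≤ L) : coordTree φ y Z K ⊆ coordTree φ y Z L :=
  fun _ hl => ⟨hl.1, hl.2.mono hK hKL⟩

end CoordTree

lemma exists_forall_eventually_le {ι β : Type*} [Countable ι] [Preorder β] [IsDirectedOrder β]
    [Nonempty β] (g : ι → ℕ → β) : ∃ h : ℕ → β, ∀ i, ∀ᶠ a in atTop, g i a ≤ h a := by
  obtain ⟨code, hcode⟩ := exists_injective_nat ι
  have bound (a : ℕ) : BddAbove ((g · a) '' (code ⁻¹' Set.Iio a)) :=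
    (((Set.finite_Iio a).preimage hcode.injOn).image _).bddAbove
  choose h hh using bound
  exact ⟨h, fun i => (eventually_gt_atTop (code i)).mono fun a ha => hh a ⟨i, ha, rfl⟩⟩

section Intervals

/-- The list `x b, …, x (a - 1)`. -/
def interval {M : Type*} (x : ℕ → M) (b a : ℕ) : List M := (List.Ico b a).map x

lemma mem_interval {M : Type*} {x : ℕ → M} {b a : ℕ} {v : M} :
    v ∈ interval x b a ↔ ∃ j, (b ≤ j ∧ j < a) ∧ x j = v := by
  simp [interval]

lemma BlocksAt.mem_of_mem_interval {k : Type*} [DivisionRing k] {x : ℕ → ℕ →₀ k} {m : ℕ → ℕ}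
    (hx : BlocksAt x m) {b a : ℕ} {v : ℕ →₀ k} (hv : v ∈ interval x b a) :
    v ∈ Submodule.span k (Set.range x) ⊓ tail k b := by
  obtain ⟨j, hj, rfl⟩ := mem_interval.1 hv
  exact ⟨Submodule.subset_span ⟨j, rfl⟩, hx.mem_tail_of_le hj.1⟩

variable {k M : Type*} [Semiring k] [AddCommMonoid M] [Module k M] {x : ℕ → M}

lemma eventually_mem_span_image_inter_Iio {J : Set ℕ} {v : M}
    (hv : v ∈ Submodule.span k (x '' J)) :
    ∀ᶠ a in atTop, v ∈ Submodule.span k (x '' (J ∩ Set.Iio a)) := by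
  induction hv using Submodule.span_induction with
  | mem v hv =>
    obtain ⟨j, hj, rfl⟩ := hv
    filter_upwards [eventually_gt_atTop j] with a ha
    exact Submodule.subset_span ⟨j, ⟨hj, ha⟩, rfl⟩
  | zero => exact .of_forall fun a => Submodule.zero_mem _
  | add v w _ _ hv hw => filter_upwards [hv, hw] with a using Submodule.add_mem _
  | smul c v _ hv => filter_upwards [hv] with a using Submodule.smul_mem _ c

lemma eventually_forall_mem_span_image_inter_Iio {J : Set ℕ} {l : List M}
    (hl : ∀ v ∈ l, v ∈ Submodule.span k (x '' J)) :
    ∀ᶠ a in atTop, ∀ v ∈ l, v ∈ Submodule.span k (x '' (J ∩ Set.Iio a)) :=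
  (eventually_all_finite l.finite_toSet).2 fun v hv =>
    eventually_mem_span_image_inter_Iio (hl v hv)

-- The interval starting at `b` is extended up to a gap `[a, h a)` of `J`.
lemma exists_interval {J : Set ℕ} {h g : ℕ → ℕ} {b : ℕ} {f l : List M}
    (hJ : ∃ᶠ a in atTop, ∀ j ∈ J, j < a ∨ h a ≤ j) (hg : ∀ᶠ a in atTop, g a ≤ h a)
    (hf : ∀ j ∈ J, x j ∈ f ∨ b ≤ j) (hl : ∀ v ∈ l, v ∈ Submodule.span k (x '' J)) :
    ∃ a, (∀ v ∈ l, v ∈ Submodule.span k {w | w ∈ f ++ interval x b a}) ∧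
      ∀ j ∈ J, x j ∈ f ++ interval x b a ∨ g a ≤ j := by
  obtain ⟨a, hgap, hspan, hga⟩ :=
    (hJ.and_eventually ((eventually_forall_mem_span_image_inter_Iio hl).and hg)).exists
  have covered {j : ℕ} (hj : j ∈ J) (hja : j < a) : x j ∈ f ++ interval x b a :=
    List.mem_append.2 ((hf j hj).imp_right fun hbj => mem_interval.2 ⟨j, ⟨hbj, hja⟩, rfl⟩)
  refine ⟨a, fun v hv => Submodule.span_mono ?_ (hspan v hv), fun j hj => ?_⟩
  · rintro _ ⟨j, ⟨hj, hja⟩, rfl⟩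
    exact covered hj hja
  · exact (hgap j hj).imp (covered hj) hga.trans

end Intervals

section GapGames

variable {𝒲 : Type} [NormedAddCommGroup 𝒲] [NormedSpace ℝ 𝒲] {𝔽 : Subfield ℝ}
  {φ : (ℕ →₀ 𝔽) →ₗ[𝔽] 𝒲} {x y z : ℕ → ℕ →₀ 𝔽} {m : ℕ → ℕ} {K : ℝ} {α ξ η : Ordinal}
  {J : Set ℕ} {b : ℕ} {h : ℕ → ℕ} {p : Position 𝔽} {l : List (ℕ →₀ 𝔽)}
  {Y Z : Submodule 𝔽 (ℕ →₀ 𝔽)}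

-- The number of steps in the tree is finite but unbounded; the factor `ω` pays for it.
lemma RankGE.exists_forall₂_combPairs
    (hl : RankGE (coordTree φ y Z K) (Ordinal.omega0 * ξ) l) (hη : η < ξ) {u : List (ℕ →₀ 𝔽)}
    (hu : ∀ v ∈ u, v ∈ Submodule.span 𝔽 (Set.range y)) :
    ∃ l' t, RankGE (coordTree φ y Z K) (Ordinal.omega0 * η) (l ++ l') ∧
      u.Forall₂ (fun v w => (v, w) ∈ combPairs 𝔽 (l ++ l').length y (entry (l ++ l'))) t ∧
      ∀ w ∈ t, w ∈ Z := by
  obtain ⟨r, hr⟩ := (eventually_forall_mem_span_image_inter_Iio (x := y) (J := Set.univ)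
    (by simpa using hu)).exists
  obtain ⟨l', hl', hrank⟩ := hl.exists_append_length_of_lt hη r
  have hpair : ∀ v ∈ u, ∃ w, (v, w) ∈ combPairs 𝔽 (l ++ l').length y (entry (l ++ l')) :=
    fun v hv => exists_mem_combPairs _ (Submodule.span_mono (Set.image_mono fun i hi => by
      simp only [Set.univ_inter, Set.mem_Iio] at hi
      simp only [List.length_append, hl', Set.mem_Iio]
      omega) (hr v hv))
  choose! f hf using hpair
  refine ⟨l', u.map f, hrank, List.forall₂_map_right_iff.2 (List.forall₂_same.2 hf), ?_⟩
  simp only [List.mem_map, forall_exists_index, and_imp, forall_apply_eq_imp_iff₂]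
  exact fun v hv => snd_mem_of_mem_combPairs (hf v hv) fun i hi =>
    hrank.mem.1 _ (entry_mem hi)

/-- `y` embeds into the spans of subsequences of `x` with prescribed gaps, with rank `β`. -/
def EmbedsWithGaps (φ : (ℕ →₀ 𝔽) →ₗ[𝔽] 𝒲) (x y : ℕ → ℕ →₀ 𝔽) (β : Ordinal) (K : ℝ) : Prop :=
  ∀ (n₀ : ℕ) (h : ℕ → ℕ), ∃ J : Set ℕ, (∀ j ∈ J, n₀ ≤ j) ∧
    (∃ᶠ a in atTop, ∀ j ∈ J, j < a ∨ h a ≤ j) ∧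
    RankGE (coordTree φ y (Submodule.span 𝔽 (x '' J)) K) β []

section FirstPlayer

variable (φ x y K) in
/-- Player I wins by a move in the span of `y` after which player II is confined to the tail from
`b` on. -/
def FirstWinsVia (ξ : Ordinal) (p : Position 𝔽) (b : ℕ) : Prop :=
  ∃ u : List (ℕ →₀ 𝔽), (∀ v ∈ u, v ∈ Submodule.span 𝔽 (Set.range y)) ∧ ∃ η < ξ,
    ∀ g v, IsReply (ListEquiv φ K) p u (Submodule.span 𝔽 (Set.range x) ⊓ tail 𝔽 b) g v →
      FirstWins (ListEquiv φ K) (Submodule.span 𝔽 (Set.range x)) η (p.play u g v)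

variable (φ x y K J) in
/-- Player I is winning although player II has copied his moves along the node `l` of the tree of
embeddings of `y` into `[x j : j ∈ J]`. -/
structure FirstState (ξ : Ordinal) (p : Position 𝔽) (l : List (ℕ →₀ 𝔽)) (b : ℕ) : Prop where
  wins : FirstWinsVia φ x y K ξ p b
  forall₂ : p.left.Forall₂ (fun v w => (v, w) ∈ combPairs 𝔽 l.length y (entry l)) p.right
  rankGE : RankGE (coordTree φ y (Submodule.span 𝔽 (x '' J)) K) (Ordinal.omega0 * ξ) l
  covered : ∀ j ∈ J, x j ∈ p.pool ∨ b ≤ j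

lemma FirstState.exists_next (hx : BlocksAt x m) (hK : 0 < K)
    (hJ : ∃ᶠ a in atTop, ∀ j ∈ J, j < a ∨ h a ≤ j) {N : Ordinal → Position 𝔽 → ℕ}
    (hN : ∀ ξ p, FirstWins (ListEquiv φ K) (Submodule.span 𝔽 (Set.range x)) ξ p →
      FirstWinsVia φ x y K ξ p (N ξ p))
    (hNh : ∀ η < ξ, ∀ u v, ∀ᶠ a in atTop, N η (p.play u (interval x b a) v) ≤ h a)
    (hst : FirstState φ x y K J ξ p l b) :
    ∃ η < ξ, ∃ q l' b', FirstState φ x y K J η q l' b' := by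
  obtain ⟨u, hu, η, hη, hwin⟩ := hst.wins
  obtain ⟨l', t, hrank, ht, htZ⟩ := hst.rankGE.exists_forall₂_combPairs hη hu
  obtain ⟨a, hspan, hcovered⟩ := exists_interval hJ (hNh η hη u t) hst.covered htZ
  have hpairs : (p.left ++ u).Forall₂
      (fun v w => (v, w) ∈ combPairs 𝔽 (l ++ l').length y (entry (l ++ l'))) (p.right ++ t) :=
    List.rel_append (hst.forall₂.imp fun v w hvw =>
      combPairs_mono (by simp) (fun _ _ => rfl) (fun i hi => entry_append hi) hvw) ht
  have hreply : IsReply (ListEquiv φ K) p u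
      (Submodule.span 𝔽 (Set.range x) ⊓ tail 𝔽 b) (interval x b a) t :=
    { mem := fun w hw => hx.mem_of_mem_interval hw
      mem_span := hspan
      length_eq := ht.length_eq.symm
      rel := (hrank.mem.2.symm hK).of_mem_combPairs fun i hi => rel_entry hpairs hi }
  exact ⟨η, hη, p.play u (interval x b a) t, l ++ l', N η _,
    hN η _ (hwin _ _ hreply), hpairs, hrank, hcovered⟩

lemma EmbedsWithGaps.not_firstWins [Countable 𝔽] (hx : BlocksAt x m)
    (hα : (Set.Iic α).Countable) (hK : 0 < K) (hy : MeetsTails (Submodule.span 𝔽 (Set.range y)))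
    (hyx : Submodule.span 𝔽 (Set.range y) ≤ Submodule.span 𝔽 (Set.range x))
    (hgaps : EmbedsWithGaps φ x y (Ordinal.omega0 * α) K) :
    ¬ FirstWins (ListEquiv φ K) (Submodule.span 𝔽 (Set.range x)) α Position.start := by
  intro hstart
  have hvia (ξ : Ordinal) (p : Position 𝔽)
      (hwin : FirstWins (ListEquiv φ K) (Submodule.span 𝔽 (Set.range x)) ξ p) :
      ∃ b, FirstWinsVia φ x y K ξ p b := by
    rw [FirstWins] at hwin
    obtain ⟨u, hu, η, hη, b, hb⟩ := hwin _ hyx hy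
    exact ⟨b, u, hu, η, hη, hb⟩
  choose! N hN using hvia
  have := hα.to_subtype
  obtain ⟨h, hh⟩ := exists_forall_eventually_le
    fun (i : Set.Iic α × Position 𝔽 × List (ℕ →₀ 𝔽) × List (ℕ →₀ 𝔽) × ℕ) a =>
      N i.1 (i.2.1.play i.2.2.1 (interval x i.2.2.2.2 a) i.2.2.2.1)
  obtain ⟨J, hJ₀, hJ, hrank⟩ := hgaps (N α Position.start) h
  have hno (ξ : Ordinal) : ξ ≤ α → ∀ p l b, ¬ FirstState φ x y K J ξ p l b := by
    induction ξ using WellFoundedLT.induction with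
    | ind ξ ih =>
      intro hξ p l b hst
      obtain ⟨η, hη, q, l', b', hst'⟩ := hst.exists_next hx hK hJ hN
        fun η hη u v => hh (⟨η, hη.le.trans hξ⟩, p, u, v, b)
      exact ih η hη (hη.le.trans hξ) q l' b' hst'
  exact hno α le_rfl _ [] _ ⟨hN _ _ hstart, .nil, hrank, fun j hj => .inr (hJ₀ j hj)⟩

end FirstPlayer

section SecondPlayer

variable (φ x K) in
/-- Player II wins if player I has to move in the tail from `b` on. -/
def SecondWinsFrom (ξ : Ordinal) (p : Position 𝔽) (b : ℕ) : Prop :=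
  ∀ u : List (ℕ →₀ 𝔽), (∀ w ∈ u, w ∈ Submodule.span 𝔽 (Set.range x) ⊓ tail 𝔽 b) → ∀ η < ξ,
    SecondCanReach (ListEquiv φ K) (Submodule.span 𝔽 (Set.range x))
      (SecondWins (ListEquiv φ K) (Submodule.span 𝔽 (Set.range x)) η) p u

variable (φ x K Y) in
/-- Player II has a winning reply to `u` in `Y`, after which player I is confined to the tail from
`b` on. -/
def SecondRepliesVia (ξ : Ordinal) (p : Position 𝔽) (u : List (ℕ →₀ 𝔽)) (b : ℕ) : Prop :=
  ∃ g v, IsReply (ListEquiv φ K) p u Y g v ∧ SecondWinsFrom φ x K ξ (p.play u g v) b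

variable (φ x y z K J Y) in
/-- The node `l` of the tree of embeddings of `z` into `Y` has been obtained by sending `z` along
the node `l'` of the tree of embeddings of `y` into `[x j : j ∈ J]`, and the result along the moves
`p.left ↦ p.right` of a game in which player II is winning. -/
structure SecondState (ξ : Ordinal) (l : List (ℕ →₀ 𝔽)) (p : Position 𝔽) (l' : List (ℕ →₀ 𝔽))
    (b : ℕ) : Prop where
  wins : SecondWinsFrom φ x K ξ p b
  rel : ListEquiv φ K p.left p.right
  length_eq : p.right.length = p.left.length
  pool_mem : ∀ w ∈ p.pool, w ∈ Y
  right_mem : ∀ w ∈ p.right, w ∈ Y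
  rankGE : RankGE (coordTree φ y (Submodule.span 𝔽 (x '' J)) K) (Ordinal.omega0 * ξ) l'
  exists_combPairs : ∀ i < l.length, ∃ q, (z i, q) ∈ combPairs 𝔽 l'.length y (entry l') ∧
    (q, entry l i) ∈ combPairs 𝔽 p.left.length (entry p.left) (entry p.right)
  covered : ∀ j ∈ J, x j ∈ p.left ∨ b ≤ j

lemma SecondState.mem_coordTree {l' : List (ℕ →₀ 𝔽)} (hK : 0 < K)
    (hst : SecondState φ x y z K J Y ξ l p l' b) : l ∈ coordTree φ z Y (K * K) := by
  have hpairs := hst.exists_combPairs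
  choose! q hq using hpairs
  constructor
  · intro v hv
    obtain ⟨i, hi, rfl⟩ := List.getElem_of_mem hv
    rw [← entry_eq_getElem hi]
    exact snd_mem_of_mem_combPairs (hq i hi).2 fun j hj =>
      hst.right_mem _ (entry_mem (hst.length_eq ▸ hj))
  · exact ((hst.rel.of_mem_combPairs fun i hi => (hq i hi).2).symm hK).trans hK hK
      (hst.rankGE.mem.2.of_mem_combPairs fun i hi => swap_mem_combPairs (hq i hi).1)

lemma SecondState.exists_next {l' : List (ℕ →₀ 𝔽)} (hx : BlocksAt x m)
    (hz : ∀ n, z n ∈ Submodule.span 𝔽 (Set.range y))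
    (hJ : ∃ᶠ a in atTop, ∀ j ∈ J, j < a ∨ h a ≤ j)
    {N : Ordinal → Position 𝔽 → List (ℕ →₀ 𝔽) → ℕ}
    (hN : ∀ η p u, SecondCanReach (ListEquiv φ K) (Submodule.span 𝔽 (Set.range x))
      (SecondWins (ListEquiv φ K) (Submodule.span 𝔽 (Set.range x)) η) p u →
      SecondRepliesVia φ x K Y η p u (N η p u))
    (hNh : ∀ᶠ a in atTop, N η p (interval x b a) ≤ h a) (hη : η < ξ)
    (hst : SecondState φ x y z K J Y ξ l p l' b) :
    ∃ v p' l'' b', SecondState φ x y z K J Y η (l ++ [v]) p' l'' b' := by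
  obtain ⟨s, t, hrank, ht, htZ⟩ :=
    hst.rankGE.exists_forall₂_combPairs hη (u := [z l.length]) (by simpa using hz l.length)
  obtain ⟨q, rfl⟩ := List.length_eq_one_iff.1 ht.length_eq.symm
  obtain ⟨a, hspan, hcovered⟩ := exists_interval hJ hNh hst.covered htZ
  set u := interval x b a
  obtain ⟨g, v, hreply, hwins⟩ :=
    hN η p u (hst.wins u (fun w hw => hx.mem_of_mem_interval hw) η hη)
  obtain ⟨w, hw⟩ := exists_mem_combPairs (entry (p.right ++ v))
    (mem_span_entry_image (hspan q (List.mem_singleton_self q)))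
  have hpool : ∀ w ∈ p.pool ++ g, w ∈ Y := List.forall_mem_append.2 ⟨hst.pool_mem, hreply.mem⟩
  refine ⟨w, p.play u g v, l' ++ s, N η p u, hwins, hreply.rel, ?_, hpool,
    List.forall_mem_append.2 ⟨hst.right_mem, fun w hw => ?_⟩, hrank, fun i hi => ?_, hcovered⟩
  · simp [Position.play, hst.length_eq, hreply.length_eq]
  · exact Submodule.span_le.2 hpool (hreply.mem_span w hw)
  · rcases (Nat.lt_succ_iff_lt_or_eq.1 (by simpa using hi) : i < l.length ∨ i = l.length) with
      hil | rfl
    · obtain ⟨q', hz', hq'⟩ := hst.exists_combPairs i hil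
      rw [entry_append hil]
      exact ⟨q', combPairs_mono (by simp) (fun _ _ => rfl) (fun j hj => entry_append hj) hz',
        combPairs_mono (by simp [Position.play]) (fun j hj => entry_append hj)
          (fun j hj => entry_append (hst.length_eq.symm ▸ hj)) hq'⟩
    · exact ⟨q, by simpa using ht, by simpa [Position.play] using hw⟩

lemma EmbedsWithGaps.rankGE_of_secondWins [Countable 𝔽] (hx : BlocksAt x m)
    (hα : (Set.Iic α).Countable) (hK : 0 < K)
    (hgaps : EmbedsWithGaps φ x y (Ordinal.omega0 * α) K)
    (hwin : SecondWins (ListEquiv φ K) (Submodule.span 𝔽 (Set.range x)) α Position.start)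
    (hY : MeetsTails Y) (hYx : Y ≤ Submodule.span 𝔽 (Set.range x))
    (hz : ∀ n, z n ∈ Submodule.span 𝔽 (Set.range y)) :
    RankGE (coordTree φ z Y (K * K)) α [] := by
  have hvia (η : Ordinal) (p : Position 𝔽) (u : List (ℕ →₀ 𝔽))
      (hreach : SecondCanReach (ListEquiv φ K) (Submodule.span 𝔽 (Set.range x))
        (SecondWins (ListEquiv φ K) (Submodule.span 𝔽 (Set.range x)) η) p u) :
      ∃ b, SecondRepliesVia φ x K Y η p u b := by
    obtain ⟨g, v, hreply, hwin⟩ := hreach Y hYx hY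
    rw [SecondWins] at hwin
    obtain ⟨b, hb⟩ := hwin
    exact ⟨b, g, v, hreply, hb⟩
  choose! N hN using hvia
  have := hα.to_subtype
  obtain ⟨h, hh⟩ := exists_forall_eventually_le
    fun (i : Set.Iic α × Position 𝔽 × ℕ) a => N i.1 i.2.1 (interval x i.2.2 a)
  rw [SecondWins] at hwin
  obtain ⟨n₀, hwin⟩ := hwin
  obtain ⟨J, hJ₀, hJ, hrank⟩ := hgaps n₀ h
  refine RankGE.of_invariant
    (R := fun ξ l => ξ ≤ α ∧ ∃ p l' b, SecondState φ x y z K J Y ξ l p l' b)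
    ?_ ⟨le_rfl, Position.start, [], n₀, hwin, listEquiv_nil, rfl, by simp [Position.start],
      by simp [Position.start], hrank, by simp, fun j hj => .inr (hJ₀ j hj)⟩
  rintro ξ l ⟨hξ, p, l', b, hst⟩
  refine ⟨hst.mem_coordTree hK, fun η hη => ?_⟩
  obtain ⟨v, hv⟩ := hst.exists_next hx hz hJ hN (hh (⟨η, hη.le.trans hξ⟩, p, b)) hη
  exact ⟨v, hη.le.trans hξ, hv⟩

end SecondPlayer

end GapGames

namespace IsSchauderBasis

variable {𝒲 : Type} [NormedAddCommGroup 𝒲] [NormedSpace ℝ 𝒲] {e : ℕ → 𝒲}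

lemma eq_of_tendsto (he : IsSchauderBasis e) {a b : ℕ → ℝ} {v : 𝒲}
    (ha : Tendsto (fun N => ∑ i ∈ Finset.range N, a i • e i) atTop (𝓝 v))
    (hb : Tendsto (fun N => ∑ i ∈ Finset.range N, b i • e i) atTop (𝓝 v)) : a = b :=
  (he v).unique ha hb

lemma tendsto_choose (he : IsSchauderBasis e) (v : 𝒲) :
    Tendsto (fun N => ∑ i ∈ Finset.range N, (he v).choose i • e i) atTop (𝓝 v) :=
  (he v).choose_spec.1

/-- The sequence of coefficients in the expansion of a vector with respect to a Schauder basis. -/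
noncomputable def coord (he : IsSchauderBasis e) : 𝒲 →ₗ[ℝ] ℕ → ℝ where
  toFun v := (he v).choose
  map_add' v w := he.eq_of_tendsto (he.tendsto_choose _) <| by
    simpa [add_smul, Finset.sum_add_distrib] using (he.tendsto_choose v).add (he.tendsto_choose w)
  map_smul' c v := he.eq_of_tendsto (he.tendsto_choose _) <| by
    simpa [mul_smul, Finset.smul_sum] using (he.tendsto_choose v).const_smul c

lemma tendsto_coord (he : IsSchauderBasis e) (v : 𝒲) :
    Tendsto (fun N => ∑ i ∈ Finset.range N, he.coord v i • e i) atTop (𝓝 v) :=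
  he.tendsto_choose v

lemma coord_apply_self (he : IsSchauderBasis e) (j : ℕ) : he.coord (e j) = Pi.single j 1 := by
  refine he.eq_of_tendsto (he.tendsto_coord _) (tendsto_const_nhds.congr' ?_)
  filter_upwards [eventually_gt_atTop j] with N hN
  simp [Pi.single_apply, hN]

/-- The partial sums of the expansion of a vector with respect to a Schauder basis. They form a
convergent sequence, which is encoded as a continuous function on `OnePoint ℕ`. -/
noncomputable def partialSums (he : IsSchauderBasis e) : 𝒲 →ₗ[ℝ] C(OnePoint ℕ, 𝒲) where
  toFun v := OnePoint.continuousMapMkNat _ v (he.tendsto_coord v)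
  map_add' v w := by
    ext p
    induction p using OnePoint.rec with
    | infty => rfl
    | coe n =>
      change ∑ i ∈ Finset.range n, he.coord (v + w) i • e i =
        ∑ i ∈ Finset.range n, he.coord v i • e i + ∑ i ∈ Finset.range n, he.coord w i • e i
      simp [add_smul, Finset.sum_add_distrib]
  map_smul' c v := by
    ext p
    induction p using OnePoint.rec with
    | infty => rfl
    | coe n =>
      change ∑ i ∈ Finset.range n, he.coord (c • v) i • e i =
        c • ∑ i ∈ Finset.range n, he.coord v i • e i
      simp [mul_smul, Finset.smul_sum]

lemma partialSums_apply_coe (he : IsSchauderBasis e) (v : 𝒲) (n : ℕ) :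
    he.partialSums v n = ∑ i ∈ Finset.range n, he.coord v i • e i := rfl

lemma partialSums_basis (he : IsSchauderBasis e) (j n : ℕ) :
    he.partialSums (e j) n = if j < n then e j else 0 := by
  simp [partialSums_apply_coe, coord_apply_self, Pi.single_apply]

lemma eq_partialSums (he : IsSchauderBasis e) {g : C(OnePoint ℕ, 𝒲)} (h0 : g (0 : ℕ) = 0)
    (hg : ∀ n : ℕ, g (n + 1 : ℕ) - g n ∈ Submodule.span ℝ {e n}) :
    g = he.partialSums (g OnePoint.infty) := by
  simp_rw [Submodule.mem_span_singleton] at hg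
  choose a ha using hg
  have hsum (n : ℕ) : g n = ∑ i ∈ Finset.range n, a i • e i := by
    induction n with
    | zero => simpa using h0
    | succ n ih => rw [Finset.sum_range_succ, ← ih, ha, add_sub_cancel]
  have hcoord : a = he.coord (g OnePoint.infty) := by
    refine he.eq_of_tendsto ?_ (he.tendsto_coord _)
    simpa only [hsum] using (OnePoint.continuous_iff_from_nat _).1 g.continuous
  ext p
  induction p using OnePoint.rec with
  | infty => rfl
  | coe n => rw [hsum, partialSums_apply_coe, hcoord]

lemma continuous_partialSums [CompleteSpace 𝒲] (he : IsSchauderBasis e) :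
    Continuous he.partialSums := by
  refine LinearMap.continuous_of_seq_closed_graph _ fun u v g hu hg => ?_
  have eval (p : OnePoint ℕ) : Tendsto (fun k => he.partialSums (u k) p) atTop (𝓝 (g p)) :=
    ((ContinuousMap.evalCLM ℝ p).continuous.tendsto g).comp hg
  have hv : g OnePoint.infty = v := tendsto_nhds_unique (eval OnePoint.infty) hu
  rw [← hv]
  refine he.eq_partialSums (tendsto_nhds_unique (eval _) (by simp [partialSums_apply_coe]))
    fun n => (Submodule.closed_of_finiteDimensional (Submodule.span ℝ {e n})).mem_of_tendsto
      ((eval _).sub (eval _)) (.of_forall fun k => ?_)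
  rw [partialSums_apply_coe, partialSums_apply_coe, Finset.sum_range_succ, add_sub_cancel_left]
  exact Submodule.smul_mem _ _ (Submodule.mem_span_singleton_self _)

lemma exists_norm_partialSums_le [CompleteSpace 𝒲] (he : IsSchauderBasis e) :
    ∃ C : ℝ, 0 ≤ C ∧ ∀ v (n : ℕ), ‖he.partialSums v n‖ ≤ C * ‖v‖ := by
  let P : 𝒲 →L[ℝ] C(OnePoint ℕ, 𝒲) := ⟨he.partialSums, he.continuous_partialSums⟩
  exact ⟨‖P‖, norm_nonneg P, fun v n => ((P v).norm_coe_le_norm n).trans (P.le_opNorm v)⟩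

lemma linearIndependent (he : IsSchauderBasis e) : LinearIndependent ℝ e := by
  refine .of_comp he.coord ?_
  rw [show he.coord ∘ e = fun j => Pi.single j 1 from funext he.coord_apply_self]
  exact Pi.linearIndependent_single_one ℕ ℝ

end IsSchauderBasis

section BasicSequences

variable {𝒲 : Type} [NormedAddCommGroup 𝒲] [NormedSpace ℝ 𝒲] {X S T : ℕ → 𝒲} {C : ℝ} {n d : ℕ}

/-- `X` is a basic sequence with constant `C` (Grunblum's criterion). -/
def IsBasicSeq (C : ℝ) (X : ℕ → 𝒲) : Prop :=
  ∀ (a : ℕ → ℝ) (n m : ℕ), n ≤ m →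
    ‖∑ i ∈ Finset.range n, a i • X i‖ ≤ C * ‖∑ i ∈ Finset.range m, a i • X i‖

lemma IsBasicSeq.norm_smul_le (hX : IsBasicSeq C X) (a : ℕ → ℝ) {j : ℕ} (hj : j < n) :
    ‖a j • X j‖ ≤ 2 * C * ‖∑ i ∈ Finset.range n, a i • X i‖ := by
  rw [← Finset.sum_range_succ_sub_sum fun i => a i • X i]
  linarith [norm_sub_le (∑ i ∈ Finset.range (j + 1), a i • X i) (∑ i ∈ Finset.range j, a i • X i),
    hX a (j + 1) n hj, hX a j n hj.le]

lemma IsBasicSeq.norm_sum_le (hS : IsBasicSeq C S) (hC : 0 ≤ C) (hnorm : ∀ i < d, ‖T i‖ = ‖S i‖)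
    (heq : ∀ i, d ≤ i → T i = S i) (a : ℕ → ℝ) (n : ℕ) :
    ‖∑ i ∈ Finset.range n, a i • T i‖ ≤
      (1 + 4 * C * d) * ‖∑ i ∈ Finset.range n, a i • S i‖ := by
  set s := ‖∑ i ∈ Finset.range n, a i • S i‖
  have term {i : ℕ} (hi : i < n) : ‖a i • (T i - S i)‖ ≤ if i < d then 4 * C * s else 0 := by
    split_ifs with hid
    · calc ‖a i • (T i - S i)‖
        _ ≤ ‖a i • T i‖ + ‖a i • S i‖ := by
          rw [smul_sub]
          exact norm_sub_le _ _
        _ = 2 * ‖a i • S i‖ := by rw [norm_smul, norm_smul, hnorm i hid, two_mul]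
        _ ≤ 4 * C * s := by linarith [hS.norm_smul_le a hi]
    · simp [heq i (not_lt.1 hid)]
  calc ‖∑ i ∈ Finset.range n, a i • T i‖
      = ‖∑ i ∈ Finset.range n, a i • S i + ∑ i ∈ Finset.range n, a i • (T i - S i)‖ := by
        simp [← Finset.sum_add_distrib, ← smul_add]
    _ ≤ s + ∑ i ∈ Finset.range n, if i < d then 4 * C * s else 0 :=
        (norm_add_le _ _).trans (add_le_add_right (norm_sum_le_of_le _ fun i hi =>
          term (Finset.mem_range.1 hi)) _)
    _ ≤ s + d * (4 * C * s) := by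
        rw [Finset.sum_ite, Finset.sum_const_zero, add_zero, Finset.sum_const, nsmul_eq_mul]
        have hcard : ((Finset.range n).filter (· < d)).card ≤ d := by
          simpa using Finset.card_le_card (t := Finset.range d) fun i hi => by simp_all
        gcongr
    _ = _ := by ring

-- Changing finitely many vectors of a basic sequence costs a constant that does not depend on
-- where the new vectors are.
lemma IsBasicSeq.seqEquiv (hS : IsBasicSeq C S) (hT : IsBasicSeq C T) (hC : 0 ≤ C)
    (hnorm : ∀ i < d, ‖T i‖ = ‖S i‖) (heq : ∀ i, d ≤ i → T i = S i) (n : ℕ) :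
    SeqEquiv (1 + 4 * C * d) n S T := fun a => by
  rw [one_div, inv_mul_le_iff₀ (by positivity)]
  exact ⟨hT.norm_sum_le hC (fun i hi => (hnorm i hi).symm) (fun i hi => (heq i hi).symm) a n,
    hS.norm_sum_le hC hnorm heq a n⟩

end BasicSequences

section Swap

variable {𝒲 : Type} [NormedAddCommGroup 𝒲] [NormedSpace ℝ 𝒲] {𝔽 : Subfield ℝ}
  {φ : (ℕ →₀ 𝔽) →ₗ[𝔽] 𝒲} {x y S T : ℕ → ℕ →₀ 𝔽} {m : ℕ → ℕ} {C K L : ℝ} {d p : ℕ} {β : Ordinal}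
  {J J' N : Set ℕ} {Z Z' : Submodule 𝔽 (ℕ →₀ 𝔽)}

lemma RankGE.coordTree_of_seqEquiv (hK : 0 < K) (hL : 0 < L)
    (hST : ∀ n, SeqEquiv L n (fun i => φ (S i)) fun i => φ (T i))
    (hS : Z ≤ Submodule.span 𝔽 (S '' N)) (hT : ∀ i ∈ N, T i ∈ Z')
    (h : RankGE (coordTree φ y Z K) β []) : RankGE (coordTree φ y Z' (L * K)) β [] := by
  let G : Submodule 𝔽 ((ℕ →₀ 𝔽) × (ℕ →₀ 𝔽)) := Submodule.span 𝔽 ((fun i => (S i, T i)) '' N)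
  have hGZ' : G ≤ Z'.comap (LinearMap.snd 𝔽 _ _) :=
    Submodule.span_le.2 (Set.image_subset_iff.2 hT)
  have hZG : Z ≤ G.map (LinearMap.fst 𝔽 _ _) := hS.trans <| Submodule.span_le.2 <|
    Set.image_subset_iff.2 fun i hi => ⟨(S i, T i), Submodule.subset_span ⟨i, hi, rfl⟩, rfl⟩
  refine RankGE.of_invariant (R := fun β l => ∃ q : List ((ℕ →₀ 𝔽) × (ℕ →₀ 𝔽)), (∀ r ∈ q, r ∈ G) ∧
    q.map Prod.snd = l ∧ RankGE (coordTree φ y Z K) β (q.map Prod.fst)) ?_ ⟨[], by simp, rfl, h⟩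
  rintro β _ ⟨q, hq, rfl, hrank⟩
  refine ⟨⟨?_, ?_⟩, fun γ hγ => ?_⟩
  · exact List.forall_mem_map.2 fun r hr => hGZ' (hq r hr)
  · obtain ⟨n, hn⟩ := (eventually_forall_mem_span_image_inter_Iio hq).exists
    have hpair (i : ℕ) (hi : i < q.length) :
        (entry (q.map Prod.snd) i, entry (q.map Prod.fst) i) ∈ combPairs 𝔽 n T S := by
      rw [entry_map rfl, entry_map rfl]
      exact swap_mem_combPairs
        (Submodule.span_mono (Set.image_mono Set.inter_subset_right) (hn _ (entry_mem hi)))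
    have hequiv := hrank.mem.2
    rw [List.length_map] at hequiv ⊢
    exact (((hST n).symm hL).of_mem_combPairs hpair).trans hL hK hequiv
  · obtain ⟨v, hv⟩ := hrank.exists_append hγ
    obtain ⟨r, hr, rfl⟩ := hZG (hv.mem.1 v (by simp))
    exact ⟨r.2, q ++ [r], List.forall_mem_append.2 ⟨hq, List.forall_mem_singleton.2 hr⟩, by simp,
      by simpa using hv⟩

/-- The indices left after deleting the window `[d, p + d)`. -/
def skipWindow (d p i : ℕ) : ℕ := if i < d then i else p + i

/-- An identification of `ℕ →₀ 𝔽` with a space of vectors as `W`, all of whose block sequences are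
basic with constant `C`. -/
structure IsBasicEmbedding (φ : (ℕ →₀ 𝔽) →ₗ[𝔽] 𝒲) (C : ℝ) : Prop where
  injective : Function.Injective φ
  norm_mem : ∀ v, ‖φ v‖ ∈ 𝔽
  nonneg : 0 ≤ C
  isBasicSeq : ∀ {x m}, BlocksAt x m → IsBasicSeq C fun i => φ (x i)

namespace IsBasicEmbedding

lemma norm_pos (hφ : IsBasicEmbedding φ C) {v : ℕ →₀ 𝔽} (hv : v ≠ 0) : 0 < ‖φ v‖ :=
  norm_pos_iff.2 ((map_ne_zero_iff φ hφ.injective).2 hv)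

lemma exists_smul_norm_eq (hφ : IsBasicEmbedding φ C) {v w : ℕ →₀ 𝔽} (hv : v ≠ 0) (hw : w ≠ 0) :
    ∃ c : 𝔽, c ≠ 0 ∧ ‖φ (c • w)‖ = ‖φ v‖ := by
  have hv := hφ.norm_pos hv
  have hw := hφ.norm_pos hw
  refine ⟨⟨‖φ v‖ / ‖φ w‖, 𝔽.div_mem (hφ.norm_mem v) (hφ.norm_mem w)⟩,
    Subtype.coe_ne_coe.1 (div_pos hv hw).ne', ?_⟩
  rw [map_smul, Subfield.smul_def, norm_smul, Real.norm_of_nonneg (by positivity),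
    div_mul_cancel₀ _ hw.ne']

lemma exists_seqEquiv_skipWindow (hφ : IsBasicEmbedding φ C) (hx : BlocksAt x m) (d p : ℕ) :
    ∃ c : ℕ → 𝔽, ∀ n, SeqEquiv (1 + 4 * C * d) n (fun i => φ (x (skipWindow d p i)))
      fun i => φ (c i • x (p + i)) := by
  choose μ hμ hμ_norm using fun i => hφ.exists_smul_norm_eq (hx.ne_zero i) (hx.ne_zero (p + i))
  have skip_strictMono : StrictMono (skipWindow d p) := fun i j hij => by
    unfold skipWindow
    split_ifs <;> omega
  have shift_strictMono : StrictMono (p + ·) := strictMono_id.const_add p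
  let c (i : ℕ) : 𝔽 := if i < d then μ i else 1
  have hc (i : ℕ) : c i ≠ 0 := by
    unfold c
    split_ifs
    exacts [hμ i, one_ne_zero]
  refine ⟨c, fun n => (hφ.isBasicSeq (hx.comp skip_strictMono)).seqEquiv
    (hφ.isBasicSeq ((hx.comp shift_strictMono).smul hc)) hφ.nonneg (fun i hi => ?_)
    (fun i hi => ?_) n⟩
  · simpa [c, skipWindow, hi] using hμ_norm i
  · simp [c, skipWindow, hi.not_gt]

lemma rankGE_coordTree_of_window (hφ : IsBasicEmbedding φ C) (hx : BlocksAt x m) (hK : 0 < K)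
    (hJ : ∀ j ∈ J, j < d ∨ p + d ≤ j ∧ j ∈ J') (hJ' : ∀ i < d, p + i ∈ J')
    (h : RankGE (coordTree φ y (Submodule.span 𝔽 (x '' J)) K) β []) :
    RankGE (coordTree φ y (Submodule.span 𝔽 (x '' J')) ((1 + 4 * C * d) * K)) β [] := by
  obtain ⟨c, hc⟩ := hφ.exists_seqEquiv_skipWindow hx d p
  have hL : 0 < 1 + 4 * C * d := by
    have := hφ.nonneg
    positivity
  refine h.coordTree_of_seqEquiv (N := {i | p + i ∈ J'}) hK hL hc
    (Submodule.span_mono ?_) fun i hi => Submodule.smul_mem _ _ (Submodule.subset_span ⟨_, hi, rfl⟩)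
  rintro _ ⟨j, hj, rfl⟩
  by_cases hjd : j < d
  · exact ⟨j, hJ' j hjd, by simp [skipWindow, hjd]⟩
  · obtain ⟨hpj, hjJ'⟩ := (hJ j hj).resolve_left hjd
    refine ⟨j - p, ?_, ?_⟩
    · simpa [show p + (j - p) = j by omega] using hjJ'
    · simp [skipWindow, show ¬ j - p < d by omega, show p + (j - p) = j by omega]

end IsBasicEmbedding

lemma exists_endpoints (F : ℕ → ℕ → ℕ) :
    ∃ a b : ℕ → ℕ, ∀ m, a m ≤ b m ∧ b m < a (m + 1) ∧ ∀ k ≤ m, F k (a m) ≤ b m := by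
  let right (m a : ℕ) : ℕ := max a ((Finset.range (m + 1)).sup fun k => F k a)
  let left : ℕ → ℕ := fun m => Nat.rec 0 (fun m a => right m a + 1) m
  refine ⟨left, fun m => right m (left m), fun m => ⟨le_max_left _ _, Nat.lt_succ_self _, ?_⟩⟩
  exact fun k hk => (Finset.le_sup (f := fun k => F k (left m))
    (Finset.mem_range.2 (Nat.lt_succ_of_le hk))).trans (le_max_right _ _)

lemma frequently_gap {a b h : ℕ → ℕ} (ha : Tendsto a atTop atTop) {A : Set ℕ} (hA : A.Infinite)
    (hh : ∀ᶠ m in atTop, h (a m) ≤ b m) {r : ℕ}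
    (hJ : ∀ j ∈ J, j < r ∨ ∀ m ∈ A, j ∉ Finset.Icc (a m) (b m)) :
    ∃ᶠ n in atTop, ∀ j ∈ J, j < n ∨ h n ≤ j := by
  refine ha.frequently (((Nat.frequently_atTop_iff_infinite.2 hA).and_eventually
    (hh.and (ha.eventually_ge_atTop r))).mono ?_)
  rintro m ⟨hm, hhm, hr⟩ j hj
  rcases hJ j hj with hjr | hjA
  · exact .inl (hjr.trans_le hr)
  · have := hjA m hm
    rw [Finset.mem_Icc] at this
    omega

-- If every `K` had a counterexample `n₀ K`, `h K`, choose the intervals `[a m, b m]` so long that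
-- each has room for a copy of `x 0, …, x (a m - 1)` beyond the relevant `n₀`. Swapping the initial
-- vectors with this copy, inside one of the intervals avoided by the given embedding, contradicts
-- the choice of `n₀` and `h`.
lemma IsBasicEmbedding.exists_embedsWithGaps (hφ : IsBasicEmbedding φ C) (hx : BlocksAt x m)
    (hfail : ∀ I : ℕ → Finset ℕ, IntervalSeq I → ∃ A : Set ℕ, A.Infinite ∧ ∃ K : ℕ, 1 ≤ K ∧
      RankGE (coordTree φ y (Submodule.span 𝔽 (x '' {j | ∀ m ∈ A, j ∉ I m})) K) β []) :
    ∃ K : ℕ, 1 ≤ K ∧ EmbedsWithGaps φ x y β K := by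
  by_contra! hno
  simp only [EmbedsWithGaps, not_forall, not_exists, not_and] at hno
  choose! n₀ h hno using hno
  let c (d : ℕ) : ℕ := ⌈1 + 4 * C * d⌉₊
  have hc (d : ℕ) : 1 + 4 * C * d ≤ c d := Nat.le_ceil _
  have hc_pos (d : ℕ) : 1 ≤ c d := Nat.one_le_ceil_iff.2 (by have := hφ.nonneg; positivity)
  obtain ⟨a, b, hab⟩ := exists_endpoints fun k a => max (n₀ (c a * k) + a) (h k a)
  have ha : StrictMono a := strictMono_nat_of_lt_succ fun m => (hab m).1.trans_lt (hab m).2.1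
  obtain ⟨A, hA, K, hK, hrank⟩ := hfail (fun m => Finset.Icc (a m) (b m))
    ⟨fun m => ⟨_, _, (hab m).1, rfl⟩, fun m i hi j hj => by
      have := (hab m).2.1
      simp only [Finset.mem_Icc] at hi hj
      omega⟩
  obtain ⟨m₀, hm₀, hKm₀⟩ := hA.exists_gt K
  let L := c (a m₀) * K
  have hL : 1 ≤ L := Nat.mul_pos (hc_pos _) hK
  have room : n₀ L + a m₀ ≤ b m₀ := (le_max_left _ _).trans ((hab m₀).2.2 K hKm₀.le)
  let J' : Set ℕ := {j | n₀ L ≤ j ∧ (j < n₀ L + a m₀ ∨ ∀ m ∈ A, j ∉ Finset.Icc (a m) (b m))}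
  refine hno L hL J' (fun j hj => hj.1) (frequently_gap ha.tendsto_atTop hA ?_ fun j hj => hj.2) ?_
  · filter_upwards [eventually_ge_atTop L] with m hm
    exact (le_max_right _ _).trans ((hab m).2.2 L hm)
  · have hrank' := hφ.rankGE_coordTree_of_window (J' := J') hx (d := a m₀) (p := n₀ L)
      (by positivity) (fun j hj => ?_) (fun i hi => ⟨by omega, .inl (by omega)⟩) hrank
    · refine hrank'.mono (coordTree_mono ?_ ?_)
      · have := hφ.nonneg
        positivity
      · push_cast [L]
        gcongr
        exact hc _
    · have hj₀ := hj m₀ hm₀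
      rw [Finset.mem_Icc] at hj₀
      exact or_iff_not_imp_left.2 fun _ => ⟨by omega, by omega, .inr hj⟩

end Swap

lemma linearIndependent_of_mem_span_image {ι κ R M : Type*} [Ring R] [IsDomain R] [AddCommGroup M]
    [Module R M] [Module.IsTorsionFree R M] {b : κ → M} (hb : LinearIndependent R b) {y : ι → M}
    {D : ι → Set κ} (hD : Pairwise (Function.onFun Disjoint D))
    (hyD : ∀ i, y i ∈ Submodule.span R (b '' D i)) (hy : ∀ i, y i ≠ 0) : LinearIndependent R y := by
  refine iSupIndep.linearIndependent _ (fun i => ?_) hyD hy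
  simp_rw [← Submodule.span_iUnion, ← Set.image_iUnion]
  exact hb.disjoint_span_image (Set.disjoint_iUnion₂_right.2 fun j hj => hD hj.symm)

lemma countable_Iic_of_lt_ord {α : Ordinal} (hα : α < (Cardinal.aleph 1).ord) :
    (Set.Iic α).Countable := by
  rw [← Set.Iio_insert]
  refine Set.Countable.insert α ?_
  rw [← Cardinal.le_aleph0_iff_set_countable, Cardinal.mk_Iio_ordinal, Cardinal.lift_le_aleph0,
    ← Order.lt_succ_iff, Cardinal.succ_aleph0]
  exact Cardinal.lt_ord.1 hα

namespace Frame

variable {𝒲 : Type} [NormedAddCommGroup 𝒲] [NormedSpace ℝ 𝒲] (ctx : Frame 𝒲)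

lemma fspan_eq_span (S : Set 𝒲) : ctx.fspan S = Submodule.span ctx.𝔽 S := by
  ext v
  constructor
  · rintro ⟨t, ht, c, hc, rfl⟩
    exact Submodule.sum_mem _ fun w hw =>
      Submodule.smul_mem _ (⟨c w, hc w⟩ : ctx.𝔽) (Submodule.subset_span (ht hw))
  · intro hv
    obtain ⟨f, t, ht, -, rfl⟩ := Submodule.mem_span_iff_exists_finset_subset.1 hv
    exact ⟨t, ht, fun w => f w, fun w => (f w).2, rfl⟩

/-- The identification of `ℕ →₀ 𝔽` with the space `W` by means of the basis `(e n)`. -/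
noncomputable def coordMap : (ℕ →₀ ctx.𝔽) →ₗ[ctx.𝔽] 𝒲 :=
  Finsupp.linearCombination ctx.𝔽 ctx.e

variable {ctx}

lemma coordMap_apply (v : ℕ →₀ ctx.𝔽) : ctx.coordMap v = ∑ i ∈ v.support, (v i : ℝ) • ctx.e i :=
  rfl

lemma coordMap_injective : Function.Injective ctx.coordMap :=
  ctx.basis.linearIndependent.restrict_scalars' ctx.𝔽

lemma fspan_image_coordMap (S : Set (ℕ →₀ ctx.𝔽)) :
    ctx.fspan (ctx.coordMap '' S) = ctx.coordMap '' (Submodule.span ctx.𝔽 S) := by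
  rw [fspan_eq_span, Submodule.span_image, Submodule.map_coe]

lemma fspan_range_coordMap (u : ℕ → ℕ →₀ ctx.𝔽) :
    ctx.fspan (Set.range fun n => ctx.coordMap (u n)) =
      ctx.coordMap '' (Submodule.span ctx.𝔽 (Set.range u)) := by
  rw [← fspan_image_coordMap, ← Set.range_comp]
  rfl

section BlockSequences

variable {x : ℕ → ℕ →₀ ctx.𝔽} {m : ℕ → ℕ}

lemma isBlockSeq_coordMap (hx : BlocksAt x m) :
    ctx.IsBlockSeq fun n => ctx.coordMap (x n) := by
  refine ⟨fun n => ?_, fun n => (map_ne_zero_iff _ coordMap_injective).2 (hx.ne_zero n),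
    fun n => (x n).support, fun n => ⟨fun i => x n i, rfl⟩, fun n i hi j hj => ?_⟩
  · rw [fspan_eq_span, ← Finsupp.range_linearCombination]
    exact ⟨x n, rfl⟩
  · have hi := (Finsupp.mem_supported _ _).1 (hx.mem_supported n) hi
    have hj := (Finsupp.mem_supported _ _).1 (hx.mem_supported (n + 1)) hj
    exact hi.2.trans_le hj.1

lemma partialSums_coordMap (hx : BlocksAt x m) (j n : ℕ) :
    ctx.basis.partialSums (ctx.coordMap (x j)) (m n) = if j < n then ctx.coordMap (x j) else 0 := by
  have hsupp {i : ℕ} (hi : i ∈ (x j).support) : i < m n ↔ j < n := by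
    have hi := (Finsupp.mem_supported _ _).1 (hx.mem_supported j) hi
    refine ⟨fun hin => hx.strictMono.lt_iff_lt.1 (hi.1.trans_lt hin), fun hjn => ?_⟩
    exact hi.2.trans_le (hx.strictMono.monotone hjn)
  simp only [coordMap_apply, map_sum, map_smul, ContinuousMap.coe_sum, ContinuousMap.coe_smul,
    Finset.sum_apply, Pi.smul_apply, IsSchauderBasis.partialSums_basis]
  split_ifs with hj
  · exact Finset.sum_congr rfl fun i hi => by rw [if_pos ((hsupp hi).2 hj)]
  · exact Finset.sum_eq_zero fun i hi => by rw [if_neg fun h => hj ((hsupp hi).1 h), smul_zero]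

lemma exists_isBasicEmbedding : ∃ C, IsBasicEmbedding ctx.coordMap C := by
  have := ctx.complete
  obtain ⟨C, hC, hle⟩ := ctx.basis.exists_norm_partialSums_le
  refine ⟨C, coordMap_injective, fun v => ctx.norm_mem _ _ fun i _ => (v i).2, hC,
    fun {x m} hx a n N hnN => ?_⟩
  convert hle (∑ i ∈ Finset.range N, a i • ctx.coordMap (x i)) (m n) using 2
  simp only [map_sum, map_smul, ContinuousMap.coe_sum, ContinuousMap.coe_smul, Finset.sum_apply,
    Pi.smul_apply, partialSums_coordMap hx, smul_ite, smul_zero]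
  rw [← Finset.sum_filter]
  congr 1
  ext i
  simp only [Finset.mem_range, Finset.mem_filter]
  omega

end BlockSequences

section InfiniteDimension

variable {b y : ℕ → 𝒲}

lemma BlockSeqRel.linearIndependent (hb : LinearIndependent ℝ b) (hy : ctx.BlockSeqRel b y) :
    LinearIndependent ℝ y := by
  obtain ⟨-, hy0, D, hyD, hD⟩ := hy
  have hD_nonempty (n : ℕ) : (D n).Nonempty := by
    rw [Finset.nonempty_iff_ne_empty]
    intro hn
    obtain ⟨a, ha⟩ := hyD n
    exact hy0 n (by simpa [hn] using ha)
  have hD_lt {n p : ℕ} (hnp : n < p) : ∀ i ∈ D n, ∀ j ∈ D p, i < j := by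
    induction p, hnp using Nat.le_induction with
    | base => exact hD n
    | succ p _ ih =>
      intro i hi j hj
      obtain ⟨l, hl⟩ := hD_nonempty p
      exact (ih i hi l hl).trans (hD p l hl j hj)
  refine linearIndependent_of_mem_span_image hb (D := fun n => D n) (fun n p hnp => ?_)
    (fun n => ?_) hy0
  · refine Set.disjoint_left.2 fun i hin hip => ?_
    rcases hnp.lt_or_gt with h | h
    exacts [(hD_lt h i hin i hip).false, (hD_lt h i hip i hin).false]
  · obtain ⟨a, ha⟩ := hyD n
    exact ha ▸ Submodule.sum_mem _ fun i hi =>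
      Submodule.smul_mem _ _ (Submodule.subset_span ⟨i, hi, rfl⟩)

lemma isInfDim_fspan_range (hy : LinearIndependent ℝ y) :
    ctx.IsInfDim (ctx.fspan (Set.range y)) := by
  rintro ⟨t, ht⟩
  refine not_finite_iff_infinite.2 (inferInstanceAs (Infinite ℕ))
    (hy.finite_of_le_span_finite y t ?_)
  rw [fspan_eq_span, fspan_eq_span] at ht
  exact Submodule.subset_span.trans (ht.trans (Submodule.span_subset_span ctx.𝔽 ℝ _))

lemma meetsTails_of_isInfDim {X : Submodule ctx.𝔽 (ℕ →₀ ctx.𝔽)}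
    (hX : ctx.IsInfDim (ctx.coordMap '' X)) : MeetsTails X := by
  classical
  refine meetsTails_of_not_fg fun ⟨t, ht⟩ => hX ⟨t.image ctx.coordMap, ?_⟩
  rw [Finset.coe_image, fspan_image_coordMap, ht]

lemma IsSubspace.exists_eq_image {Y : Set 𝒲} (hY : ctx.IsSubspace Y)
    {X : Submodule ctx.𝔽 (ℕ →₀ ctx.𝔽)} (hYX : Y ⊆ ctx.coordMap '' X) :
    ∃ Z ≤ X, Y = ctx.coordMap '' Z := by
  let S : Submodule ctx.𝔽 𝒲 :=
    { carrier := Y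
      zero_mem' := hY.1
      add_mem' := fun ha hb => hY.2.1 _ _ ha hb
      smul_mem' := fun c v hv => hY.2.2 c c.2 v hv }
  refine ⟨S.comap ctx.coordMap ⊓ X, inf_le_right, ?_⟩
  ext w
  refine ⟨fun hw => ?_, fun ⟨v, hv, hvw⟩ => hvw ▸ hv.1⟩
  obtain ⟨v, hv, rfl⟩ := hYX hw
  exact ⟨v, ⟨hw, hv⟩, rfl⟩

end InfiniteDimension

section Dichotomy

variable {x y : ℕ → ℕ →₀ ctx.𝔽} {m : ℕ → ℕ} {α β : Ordinal} {K : ℝ}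

lemma exists_rankGE_coordTree {J : Set ℕ}
    (h : (β : WithTop Ordinal) < embIndex (fun n => ctx.coordMap (y n))
      (ctx.fspan {v | ∃ j, j ∈ J ∧ v = ctx.coordMap (x j)})) :
    ∃ K : ℕ, 1 ≤ K ∧
      RankGE (coordTree ctx.coordMap y (Submodule.span ctx.𝔽 (x '' J)) K) β [] := by
  have himage : {v | ∃ j, j ∈ J ∧ v = ctx.coordMap (x j)} = ctx.coordMap '' (x '' J) := by
    ext v
    simp [eq_comm]
  rw [himage, fspan_image_coordMap, lt_embIndex_iff] at h
  obtain ⟨K, hK, hrank⟩ := h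
  have hK₀ : 0 < K := by linarith
  exact ⟨⌈K⌉₊, Nat.one_le_ceil_iff.2 hK₀,
    (hrank.coordTree_of_map coordMap_injective).mono (coordTree_mono hK₀ (Nat.le_ceil K))⟩

lemma exists_embedsWithGaps (hx : BlocksAt x m)
    (hfail : ∀ I : ℕ → Finset ℕ, IntervalSeq I → ∃ A : Set ℕ, A.Infinite ∧
      (β : WithTop Ordinal) < embIndex (fun n => ctx.coordMap (y n))
        (ctx.fspan {v | ∃ j : ℕ, (∀ m ∈ A, j ∉ I m) ∧ v = ctx.coordMap (x j)})) :
    ∃ K : ℕ, 1 ≤ K ∧ EmbedsWithGaps ctx.coordMap x y β K := by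
  obtain ⟨C, hC⟩ := ctx.exists_isBasicEmbedding
  refine hC.exists_embedsWithGaps hx fun I hI => ?_
  obtain ⟨A, hA, hlt⟩ := hfail I hI
  exact ⟨A, hA, exists_rankGE_coordTree hlt⟩

lemma lt_embIndex_of_embedsWithGaps (hx : BlocksAt x m) (hα : (Set.Iic α).Countable) (hK : 1 ≤ K)
    (hdec : Decided (ListEquiv ctx.coordMap K) α .start (Submodule.span ctx.𝔽 (Set.range x)))
    (hy : MeetsTails (Submodule.span ctx.𝔽 (Set.range y)))
    (hyx : Submodule.span ctx.𝔽 (Set.range y) ≤ Submodule.span ctx.𝔽 (Set.range x))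
    (hgaps : EmbedsWithGaps ctx.coordMap x y (Ordinal.omega0 * α) K) {Y : Set 𝒲}
    (hY : ctx.IsSubspace Y) (hYy : Y ⊆ ctx.coordMap '' (Submodule.span ctx.𝔽 (Set.range y)))
    (hYinf : ctx.IsInfDim Y) {z : ℕ → 𝒲}
    (hz : ∀ n, z n ∈ ctx.coordMap '' (Submodule.span ctx.𝔽 (Set.range y))) :
    (α : WithTop Ordinal) < embIndex z Y := by
  have := ctx.countable.to_subtype
  have hK₀ : 0 < K := by linarith
  obtain ⟨Z, hZy, rfl⟩ := hY.exists_eq_image hYy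
  choose u hu hu_eq using hz
  obtain rfl := funext hu_eq
  have hwin := hdec.resolve_right (hgaps.not_firstWins hx hα hK₀ hy hyx)
  exact lt_embIndex_iff.2 ⟨K * K, one_le_mul_of_one_le_of_one_le hK hK,
    (hgaps.rankGE_of_secondWins hx hα hK₀ hwin (meetsTails_of_isInfDim hYinf)
      (hZy.trans hyx) hu).map_coordTree⟩

end Dichotomy

end Frame

theorem main_dichotomy_general
    (𝒲 : Type) [NormedAddCommGroup 𝒲] [NormedSpace ℝ 𝒲] (ctx : Frame 𝒲)
    (α : Ordinal) (hα : α < (Cardinal.aleph 1).ord) :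
    ∃ x : ℕ → 𝒲, ctx.IsBlockSeq x ∧
      ((∀ y : ℕ → 𝒲, (∀ n, y n ∈ ctx.fspan (Set.range x)) →
          ctx.IsInfDim (ctx.fspan (Set.range y)) →
          ∃ I : ℕ → Finset ℕ, IntervalSeq I ∧
            ∀ A : Set ℕ, A.Infinite →
              embIndex y (ctx.fspan {v | ∃ j : ℕ, (∀ m ∈ A, j ∉ I m) ∧ v = x j})
                ≤ ((Ordinal.omega0 * α : Ordinal) : WithTop Ordinal)) ∨
       (∀ Y : Set 𝒲, ctx.IsSubspace Y → Y ⊆ ctx.fspan (Set.range x) → ctx.IsInfDim Y →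
          ∀ z : ℕ → 𝒲, (∀ n, z n ∈ ctx.fspan (Set.range x)) →
            (α : WithTop Ordinal) < embIndex z Y)) := by
  have hα := countable_Iic_of_lt_ord hα
  have := ctx.countable.to_subtype
  obtain ⟨x, m, hx, hdec⟩ := exists_blocksAt_decided (hα.mono Set.Iio_subset_Iic_self)
    (fun K : ℕ => ListEquiv ctx.coordMap K) .start
  by_contra! hno
  obtain ⟨⟨y, hyx, hy, hfail⟩, -⟩ := hno _ (Frame.isBlockSeq_coordMap hx)
  rw [Frame.fspan_range_coordMap] at hyx
  choose v hv hv_eq using hyx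
  obtain rfl := funext hv_eq
  have hvx := Submodule.span_le.2 (Set.range_subset_iff.2 hv)
  have hv_tails := Frame.meetsTails_of_isInfDim (Frame.fspan_range_coordMap v ▸ hy)
  obtain ⟨K, hK, hgaps⟩ := Frame.exists_embedsWithGaps hx hfail
  obtain ⟨w, _, hw, hwv⟩ := exists_blocksAt (fun _ => _) fun _ => hv_tails
  have hw_image : ctx.fspan (Set.range fun n => ctx.coordMap (w n)) ⊆
      ctx.coordMap '' (Submodule.span ctx.𝔽 (Set.range v)) := by
    rw [Frame.fspan_range_coordMap]
    exact Set.image_mono (Submodule.span_le.2 (Set.range_subset_iff.2 hwv))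
  obtain ⟨-, Y, hY, hYw, hYinf, z, hz, hle⟩ := hno _ (Frame.isBlockSeq_coordMap hw)
  exact hle.not_gt (Frame.lt_embIndex_of_embedsWithGaps hx hα (mod_cast hK) (hdec K) hv_tails hvx
    hgaps hY (hYw.trans hw_image) hYinf fun n => hw_image (hz n))

/-- For every countable ordinal `α` there is a block subspace
`X = [x n] ⊆ W` such that either (1) every normalised block sequence `(y n)` in `X`
admits successive finite intervals `I 0 < I 1 < …` with
`Emb((y n), [x j : j ∉ ⋃_{m ∈ A} I m]) ≤ ω·α` for every infinite `A ⊆ ℕ`, or (2) for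
every infinite-dimensional subspace `Y ⊆ X` and every block sequence `(z n)` in `X`,
`Emb((z n), Y) > α`. -/
theorem main_dichotomy
    (𝒲 : Type) [NormedAddCommGroup 𝒲] [NormedSpace ℝ 𝒲] (ctx : Frame 𝒲)
    (α : Ordinal) (hα : α < (Cardinal.aleph 1).ord) :
    ∃ x : ℕ → 𝒲, ctx.IsBlockSeq x ∧
      ((∀ y : ℕ → 𝒲, ctx.BlockSeqRel x y → (∀ n, ‖y n‖ = 1) →
          ∃ I : ℕ → Finset ℕ, IntervalSeq I ∧
            ∀ A : Set ℕ, A.Infinite →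
              embIndex y (ctx.fspan {v | ∃ j : ℕ, (∀ m ∈ A, j ∉ I m) ∧ v = x j})
                ≤ ((Ordinal.omega0 * α : Ordinal) : WithTop Ordinal)) ∨
       (∀ Y : Set 𝒲, ctx.IsSubspace Y → Y ⊆ ctx.fspan (Set.range x) → ctx.IsInfDim Y →
          ∀ z : ℕ → 𝒲, ctx.IsBlockSeq z → (∀ n, z n ∈ ctx.fspan (Set.range x)) →
            (α : WithTop Ordinal) < embIndex z Y)) := by
  obtain ⟨x, hx, h⟩ := main_dichotomy_general 𝒲 ctx α hα
  refine ⟨x, hx, h.imp (fun h y hy _ => h y hy.1 ?_) fun h Y hY hYx hYinf z _ => h Y hY hYx hYinf z⟩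
  exact Frame.isInfDim_fspan_range
    (hy.linearIndependent (hx.linearIndependent ctx.basis.linearIndependent))

end Rosendal
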